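/- Fix ℏ > 0, N ≥ 2, complex numbers γ_{N1},…,γ_{NN}, and real numbers η = (η_{nj}), 1 ≤ j ≤ n ≤ N−1, with min_{1≤j≤n} η_{nj} > max_{1≤m≤n+1} η_{n+1,m} for every 1 ≤ n ≤ N−1, where η_{Nm} := Im γ_{Nm}. Define ψ : ℝ^N → ℂ by ψ(x_1,…,x_N) = ∫_{ℝ^{N(N−1)/2}} F(ξ; x) dξ, where F(ξ; x) = ∏_{n=1}^{N−1} [∏_{k=1}^{n}∏_{m=1}^{n+1} ℏ^{(γ_{nk} − γ_{n+1,m})/(iℏ)}·Γ((γ_{nk} − γ_{n+1,m})/(iℏ)) / ∏_{s≠p, s,p≤n} Γ((γ_{ns} − γ_{np})/(iℏ))]·exp((i/ℏ)·Σ_{n=1}^{N}(Σ_{j=1}^{n} γ_{nj} − Σ_{j=1}^{n−1} γ_{n−1,j})·x_n) with γ_{nj} = ξ_{nj} + iη_{nj} for n ≤ N−1. Then ψ is twice continuously differentiable on ℝ^N and satisfies the first two quantum open Toda chain equations: −iℏ·Σ_{n=1}^{N} ∂ψ/∂x_n = (Σ_{j=1}^{N} γ_{Nj})·ψ and −ℏ²·Σ_{1≤m<n≤N}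 ∂²ψ/∂x_m∂x_n − (Σ_{j=1}^{N−1} e^{x_j − x_{j+1}})·ψ = (Σ_{1≤j<k≤N} γ_{Nj}γ_{Nk})·ψ. -/

import Mathlib

open Finset MeasureTheory

noncomputable section

/-- A Gelfand–Zetlin array: complex values `γ n j`, relevant for `1 ≤ j ≤ n ≤ N`. -/
abbrev GZ := ℕ → ℕ → ℂ

/-- Index set of the Gelfand–Zetlin variables `(n, j)` with `1 ≤ j ≤ n ≤ N − 1`
(the pair `(p.1, p.2)` encodes `(n, j)`). -/
abbrev GZIdx (N : ℕ) := {p : Fin N × Fin N // 1 ≤ (p.2 : ℕ) ∧ (p.2 : ℕ) ≤ (p.1 : ℕ)}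

/-- The Gelfand–Zetlin array on the tube: lower levels `γ_{nj} = ξ_{nj} + iη_{nj}`,
top row `g`. -/
def gzTube (N : ℕ) (g : ℕ → ℂ) (η : ℕ → ℕ → ℝ) (ξ : GZIdx N → ℝ) : GZ := fun n j =>
  if h : 1 ≤ j ∧ j ≤ n ∧ n < N then
    ((ξ ⟨(⟨n, h.2.2⟩, ⟨j, lt_of_le_of_lt h.2.1 h.2.2⟩), h.1, h.2.1⟩ : ℝ) : ℂ) +
      Complex.I * (η n j : ℂ)
  else g j

/-- `ℏ^z := exp(z log ℏ)`. -/
def hpow (ℏ : ℝ) (z : ℂ) : ℂ := Complex.exp (z * (Real.log ℏ : ℂ))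

/-- The integrand of the Mellin–Barnes representation of the `GL(N,ℝ)` open Toda
chain wave function (`x n` is the Toda variable `x_n`, `1 ≤ n ≤ N`). -/
def todaIntegrand (ℏ : ℝ) (N : ℕ) (x : ℕ → ℝ) (γ : GZ) : ℂ :=
  (∏ n ∈ Icc 1 (N - 1),
    (∏ k ∈ Icc 1 n, ∏ m ∈ Icc 1 (n + 1),
      hpow ℏ ((γ n k - γ (n + 1) m) / (Complex.I * ℏ)) *
        Complex.Gamma ((γ n k - γ (n + 1) m) / (Complex.I * ℏ))) /
      ∏ s ∈ Icc 1 n, ∏ p ∈ (Icc 1 n).erase s,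
        Complex.Gamma ((γ n s - γ n p) / (Complex.I * ℏ))) *
    Complex.exp ((Complex.I / (ℏ : ℂ)) * ∑ n ∈ Icc 1 N,
      ((∑ j ∈ Icc 1 n, γ n j) - ∑ j ∈ Icc 1 (n - 1), γ (n - 1) j) * (x n : ℂ))

/-- The `1`-based coordinate `x_n` of `x : Fin N → ℝ` (so `xval x n = x_{n}` for
`1 ≤ n ≤ N`, with `0`-based entry `x (n−1)`). -/
def xval {N : ℕ} (x : Fin N → ℝ) (n : ℕ) : ℝ :=
  if h : n - 1 < N then x ⟨n - 1, h⟩ else 0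

/-!
Multiplying the Mellin–Barnes integrand `F` by `1 / ∏_{p ≠ j} (γ_{nj} - γ_{np})` and by
`∏_m (γ_{nj} - γ_{n-1,m})` amounts, up to constants, to raising by one the arguments of
`Γ((γ_{n-1,m} - γ_{nj})/(iℏ))` and `Γ((γ_{nj} - γ_{np})/(iℏ))`, so the product is again holomorphic
near the contours: the *marked integrand*. Lagrange interpolation shows that the marked integrands
of row `n` sum to `± F`. Each of them may be integrated along the contour `γ_{nj} + iℏ` instead,
where the Gamma recurrence turns it into
`e^{-(x_n - x_{n+1})} ∏_m (γ_{nj} - γ_{n+1,m}) / ∏_{p ≠ j} (γ_{nj} - γ_{np}) · F`; a second Lagrange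
sum now gives a quadratic polynomial in the array. Hence that polynomial acts under the integral as
the potential `e^{x_n - x_{n+1}}`, and summing over `n` the polynomials telescope against
`∑_{m<n} p_m p_n`, leaving the second elementary symmetric function of the top row.

Integrability, differentiation under the integral and the contour shifts all rest on one estimate:
by `|Γ(a + ib)| ≈ |b|^{a-1/2} e^{-π|b|/2}` the integrand decays exponentially in
`∑ |γ_{nk} - γ_{n+1,m}| - ∑ |γ_{ns} - γ_{np}|`, which dominates the norm of the array.
-/

open Complex (I)
open scoped Real

/-! ### Growth of the Gamma function in vertical strips -/

theorem differentiableAt_real_Gamma_of_pos {x : ℝ} (hx : 0 < x) :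
    DifferentiableAt ℝ Real.Gamma x :=
  Real.differentiableAt_Gamma fun m h => by
    linarith [show (0 : ℝ) ≤ m from m.cast_nonneg]

theorem norm_ofReal_mul_norm_add_mul_I_le {a b : ℝ} (y : ℝ) (ha : 0 ≤ a) (hab : a ≤ b) :
    ‖(a : ℂ)‖ * ‖(b : ℂ) + y * I‖ ≤ ‖(a : ℂ) + y * I‖ * ‖(b : ℂ)‖ := by
  have hsq : a ^ 2 ≤ b ^ 2 := by gcongr
  rw [← sq_le_sq₀ (by positivity) (by positivity), mul_pow, mul_pow]
  simp only [Complex.sq_norm, Complex.normSq_add_mul_I, Complex.normSq_ofReal]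
  nlinarith [mul_le_mul_of_nonneg_right hsq (sq_nonneg y)]

theorem norm_GammaSeq_mul_le {a b : ℝ} (y : ℝ) (ha : 0 < a) (hab : a ≤ b) {n : ℕ} (hn : 0 < n) :
    ‖Complex.GammaSeq (a + y * I) n‖ * ‖Complex.GammaSeq b n‖ ≤
      ‖Complex.GammaSeq a n‖ * ‖Complex.GammaSeq (b + y * I) n‖ := by
  have prod_pos (c t : ℝ) (hc : 0 < c) : 0 < ∏ j ∈ range (n + 1), ‖(c : ℂ) + t * I + j‖ := by
    refine Finset.prod_pos fun j _ => norm_pos_iff.2 fun h => ?_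
    have hre : c + (j : ℝ) = 0 := by simpa using congrArg Complex.re h
    linarith [show (0 : ℝ) ≤ j from j.cast_nonneg]
  have prod_pos_real (c : ℝ) (hc : 0 < c) : 0 < ∏ j ∈ range (n + 1), ‖(c : ℂ) + j‖ := by
    simpa using prod_pos c 0 hc
  have hprod : (∏ j ∈ range (n + 1), ‖(a : ℂ) + j‖) * ∏ j ∈ range (n + 1), ‖(b : ℂ) + y * I + j‖ ≤
      (∏ j ∈ range (n + 1), ‖(a : ℂ) + y * I + j‖) * ∏ j ∈ range (n + 1), ‖(b : ℂ) + j‖ := by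
    simp only [← Finset.prod_mul_distrib]
    refine Finset.prod_le_prod (fun j _ => by positivity) fun j _ => ?_
    have h := norm_ofReal_mul_norm_add_mul_I_le (a := a + j) (b := b + j) y (by positivity)
      (by linarith)
    push_cast at h
    simpa only [add_right_comm] using h
  simp only [Complex.GammaSeq, norm_div, norm_mul, norm_prod, Complex.norm_natCast_cpow_of_pos hn,
    Complex.add_re, Complex.ofReal_re, Complex.re_ofReal_mul, Complex.I_re, mul_zero, add_zero,
    div_mul_div_comm]
  exact div_le_div_of_nonneg_left (by positivity)
    (mul_pos (prod_pos_real a ha) (prod_pos b y (ha.trans_le hab))) hprod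

theorem norm_Gamma_mul_Gamma_le {a b : ℝ} (y : ℝ) (ha : 0 < a) (hab : a ≤ b) :
    ‖Complex.Gamma (a + y * I)‖ * Real.Gamma b ≤
      Real.Gamma a * ‖Complex.Gamma (b + y * I)‖ := by
  have norm_Gamma_ofReal {c : ℝ} (hc : 0 < c) : ‖Complex.Gamma c‖ = Real.Gamma c := by
    rw [Complex.Gamma_ofReal, Complex.norm_of_nonneg (Real.Gamma_pos_of_pos hc).le]
  rw [← norm_Gamma_ofReal ha, ← norm_Gamma_ofReal (ha.trans_le hab)]
  refine le_of_tendsto_of_tendsto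
    ((Complex.GammaSeq_tendsto_Gamma _).norm.mul (Complex.GammaSeq_tendsto_Gamma _).norm)
    ((Complex.GammaSeq_tendsto_Gamma _).norm.mul (Complex.GammaSeq_tendsto_Gamma _).norm) ?_
  filter_upwards [Filter.eventually_gt_atTop 0] with n hn
  exact norm_GammaSeq_mul_le y ha hab hn

theorem sq_norm_Gamma_half_add_mul_I (y : ℝ) :
    ‖Complex.Gamma (1 / 2 + y * I)‖ ^ 2 = π / Real.cosh (π * y) := by
  have conj_eq : (1 : ℂ) - (1 / 2 + y * I) = (starRingEnd ℂ) (1 / 2 + y * I) := by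
    apply Complex.ext <;> norm_num
  have sin_eq : Complex.sin (π * (1 / 2 + y * I)) = Real.cosh (π * y) := by
    rw [show (π : ℂ) * (1 / 2 + y * I) = ((π * y : ℝ) : ℂ) * I + π / 2 by push_cast; ring,
      Complex.sin_add_pi_div_two, Complex.cos_mul_I, Complex.ofReal_cosh]
  have h := Complex.Gamma_mul_Gamma_one_sub (1 / 2 + y * I)
  rw [conj_eq, Complex.Gamma_conj, Complex.mul_conj, sin_eq] at h
  rw [Complex.sq_norm]
  exact_mod_cast h

theorem exp_neg_half_mul_sq_mul_exp (t : ℝ) :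
    Real.exp (-(π / 2 * t)) ^ 2 * Real.exp (π * t) = 1 := by
  rw [← Real.exp_nat_mul, ← Real.exp_add, Real.exp_eq_one_iff]
  push_cast
  ring

theorem norm_Gamma_half_add_mul_I_le (y : ℝ) :
    ‖Complex.Gamma (1 / 2 + y * I)‖ ≤ 3 * Real.exp (-(π / 2 * |y|)) := by
  have hcosh : Real.exp (π * |y|) ≤ 2 * Real.cosh (π * y) := by
    rw [← Real.cosh_abs, Real.cosh_eq, abs_mul, abs_of_pos Real.pi_pos]
    linarith [Real.exp_pos (-(π * |y|))]
  rw [← sq_le_sq₀ (norm_nonneg _) (by positivity), sq_norm_Gamma_half_add_mul_I,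
    div_le_iff₀ (Real.cosh_pos _)]
  nlinarith [mul_le_mul_of_nonneg_left hcosh (sq_nonneg (Real.exp (-(π / 2 * |y|)))),
    exp_neg_half_mul_sq_mul_exp |y|, Real.pi_lt_four]

theorem exp_neg_le_norm_Gamma_half_add_mul_I (y : ℝ) :
    Real.exp (-(π / 2 * |y|)) ≤ ‖Complex.Gamma (1 / 2 + y * I)‖ := by
  have hcosh : Real.cosh (π * y) ≤ Real.exp (π * |y|) := by
    rw [← Real.cosh_abs, Real.cosh_eq, abs_mul, abs_of_pos Real.pi_pos]
    have : Real.exp (-(π * |y|)) ≤ Real.exp (π * |y|) :=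
      Real.exp_le_exp.2 (neg_le_self (by positivity))
    linarith
  rw [← sq_le_sq₀ (by positivity) (norm_nonneg _), sq_norm_Gamma_half_add_mul_I,
    le_div_iff₀ (Real.cosh_pos _)]
  nlinarith [mul_le_mul_of_nonneg_left hcosh (sq_nonneg (Real.exp (-(π / 2 * |y|)))),
    exp_neg_half_mul_sq_mul_exp |y|, Real.pi_gt_three]

theorem norm_le_mul_one_add_abs_im {w : ℂ} {R : ℝ} (hR : 1 ≤ R) (hw : |w.re| ≤ R) :
    ‖w‖ ≤ R * (1 + |w.im|) := by
  have him : |w.im| ≤ R * |w.im| := le_mul_of_one_le_left (abs_nonneg _) hR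
  linarith [Complex.norm_le_abs_re_add_abs_im w]

theorem exists_norm_Gamma_nat_add_half_le (q : ℕ) : ∃ C, 0 ≤ C ∧ ∀ y : ℝ,
    ‖Complex.Gamma ((q + 1 / 2 : ℝ) + y * I)‖ ≤
      C * (1 + |y|) ^ q * Real.exp (-(π / 2 * |y|)) := by
  induction q with
  | zero => exact ⟨3, by norm_num, fun y => by simpa using norm_Gamma_half_add_mul_I_le y⟩
  | succ q ih =>
    obtain ⟨C, hC, bound⟩ := ih
    refine ⟨(q + 1) * C, by positivity, fun y => ?_⟩
    set w : ℂ := (q + 1 / 2 : ℝ) + y * I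
    have hre : w.re = q + 1 / 2 := by simp [w]
    have him : w.im = y := by simp [w]
    have hw : w ≠ 0 := fun h => by
      have : (0 : ℝ) < w.re := by rw [hre]; positivity
      simp [h] at this
    have norm_w : ‖w‖ ≤ (q + 1) * (1 + |y|) :=
      him ▸ norm_le_mul_one_add_abs_im (by linarith [show (0 : ℝ) ≤ q from q.cast_nonneg])
        (by rw [hre, abs_of_pos (by positivity)]; linarith)
    rw [show (((q + 1 : ℕ) + 1 / 2 : ℝ) : ℂ) + y * I = w + 1 by simp only [w]; push_cast; ring,
      Complex.Gamma_add_one _ hw, norm_mul]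
    calc ‖w‖ * ‖Complex.Gamma w‖
        ≤ ((q + 1) * (1 + |y|)) * (C * (1 + |y|) ^ q * Real.exp (-(π / 2 * |y|))) :=
          mul_le_mul norm_w (bound y) (norm_nonneg _) (by positivity)
      _ = (q + 1) * C * (1 + |y|) ^ (q + 1) * Real.exp (-(π / 2 * |y|)) := by ring

theorem exists_norm_Gamma_le_of_re_mem_Icc {δ : ℝ} (hδ : 0 < δ) (M : ℝ) :
    ∃ C, 0 ≤ C ∧ ∃ p : ℕ, ∀ w : ℂ, w.re ∈ Set.Icc δ M →
      ‖Complex.Gamma w‖ ≤ C * (1 + |w.im|) ^ p * Real.exp (-(π / 2 * |w.im|)) := by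
  obtain ⟨q, hq⟩ := exists_nat_ge M
  obtain ⟨C, hC, bound⟩ := exists_norm_Gamma_nat_add_half_le q
  have hcont : ContinuousOn Real.Gamma (Set.Icc δ M) := fun x hx =>
    (differentiableAt_real_Gamma_of_pos (hδ.trans_le hx.1)).continuousAt.continuousWithinAt
  obtain ⟨A, hA⟩ := isCompact_Icc.exists_bound_of_continuousOn hcont
  have hGamma : 0 < Real.Gamma (q + 1 / 2) := Real.Gamma_pos_of_pos (by positivity)
  refine ⟨|A| / Real.Gamma (q + 1 / 2) * C, by positivity, q, fun w hw => ?_⟩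
  have hcmp := norm_Gamma_mul_Gamma_le (b := q + 1 / 2) w.im (hδ.trans_le hw.1)
    (by linarith [hw.2])
  rw [Complex.re_add_im, ← le_div_iff₀ hGamma] at hcmp
  have hre : Real.Gamma w.re ≤ |A| := (le_abs_self _).trans ((hA _ hw).trans (le_abs_self _))
  calc ‖Complex.Gamma w‖
      ≤ |A| * (C * (1 + |w.im|) ^ q * Real.exp (-(π / 2 * |w.im|))) / Real.Gamma (q + 1 / 2) :=
        hcmp.trans (by gcongr; exact bound w.im)
    _ = _ := by ring

theorem exists_norm_inv_Gamma_le_of_half_le_re (M : ℝ) :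
    ∃ C, 0 ≤ C ∧ ∀ w : ℂ, w.re ∈ Set.Icc (1 / 2) M →
      ‖(Complex.Gamma w)⁻¹‖ ≤ C * Real.exp (π / 2 * |w.im|) := by
  have hcont : ContinuousOn (fun x => (Real.Gamma x)⁻¹) (Set.Icc (1 / 2) M) := fun x hx => by
    have hpos : 0 < x := one_half_pos.trans_le hx.1
    exact ((differentiableAt_real_Gamma_of_pos hpos).continuousAt.inv₀
      (Real.Gamma_pos_of_pos hpos).ne').continuousWithinAt
  obtain ⟨A, hA⟩ := isCompact_Icc.exists_bound_of_continuousOn hcont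
  refine ⟨|A| * Real.Gamma (1 / 2),
    mul_nonneg (abs_nonneg A) (Real.Gamma_pos_of_pos one_half_pos).le, fun w hw => ?_⟩
  have hpos : 0 < w.re := one_half_pos.trans_le hw.1
  have hre : (Real.Gamma w.re)⁻¹ ≤ |A| := (le_abs_self _).trans ((hA _ hw).trans (le_abs_self _))
  have hcmp := norm_Gamma_mul_Gamma_le w.im one_half_pos hw.1
  rw [Complex.re_add_im, ← le_div_iff₀ (Real.Gamma_pos_of_pos hpos)] at hcmp
  have hlower : Real.exp (-(π / 2 * |w.im|)) ≤
      |A| * Real.Gamma (1 / 2) * ‖Complex.Gamma w‖ := by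
    calc Real.exp (-(π / 2 * |w.im|))
        ≤ ‖Complex.Gamma ((1 / 2 : ℝ) + w.im * I)‖ := by
          simpa using exp_neg_le_norm_Gamma_half_add_mul_I w.im
      _ ≤ Real.Gamma (1 / 2) * ‖Complex.Gamma w‖ * (Real.Gamma w.re)⁻¹ := hcmp
      _ ≤ Real.Gamma (1 / 2) * ‖Complex.Gamma w‖ * |A| := by
          have := Real.Gamma_pos_of_pos one_half_pos
          gcongr
      _ = |A| * Real.Gamma (1 / 2) * ‖Complex.Gamma w‖ := by ring
  rw [Real.exp_neg, inv_le_iff_one_le_mul₀ (Real.exp_pos _)] at hlower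
  rw [norm_inv, inv_le_iff_one_le_mul₀ (norm_pos_iff.2 (Complex.Gamma_ne_zero_of_re_pos hpos))]
  linarith

theorem exists_norm_inv_Gamma_le_of_half_sub_nat_le_re (q : ℕ) (M : ℝ) :
    ∃ C, 0 ≤ C ∧ ∀ w : ℂ, w.re ∈ Set.Icc (1 / 2 - q : ℝ) M →
      ‖(Complex.Gamma w)⁻¹‖ ≤ C * (1 + |w.im|) ^ q * Real.exp (π / 2 * |w.im|) := by
  induction q generalizing M with
  | zero => simpa using exists_norm_inv_Gamma_le_of_half_le_re M
  | succ q ih =>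
    obtain ⟨C, hC, bound⟩ := ih (M + 1)
    refine ⟨(|M| + q + 1) * C, by positivity, fun w ⟨hlower, hupper⟩ => ?_⟩
    push_cast at hlower
    have norm_w : ‖w‖ ≤ (|M| + q + 1) * (1 + |w.im|) := by
      have : (0 : ℝ) ≤ q := q.cast_nonneg
      refine norm_le_mul_one_add_abs_im (by linarith [abs_nonneg M]) (abs_le.2 ⟨?_, ?_⟩) <;>
        linarith [abs_nonneg M, le_abs_self M]
    have bound_succ : ‖(Complex.Gamma (w + 1))⁻¹‖ ≤
        C * (1 + |w.im|) ^ q * Real.exp (π / 2 * |w.im|) := by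
      have h := bound (w + 1)
      simp only [Complex.add_re, Complex.one_re, Complex.add_im, Complex.one_im, add_zero] at h
      exact h ⟨by linarith, by linarith⟩
    rw [Complex.one_div_Gamma_eq_self_mul_one_div_Gamma_add_one, norm_mul]
    calc ‖w‖ * ‖(Complex.Gamma (w + 1))⁻¹‖
        ≤ ((|M| + q + 1) * (1 + |w.im|)) *
            (C * (1 + |w.im|) ^ q * Real.exp (π / 2 * |w.im|)) :=
          mul_le_mul norm_w bound_succ (norm_nonneg _) (by positivity)
      _ = (|M| + q + 1) * C * (1 + |w.im|) ^ (q + 1) * Real.exp (π / 2 * |w.im|) := by ring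

theorem exists_norm_inv_Gamma_le_of_abs_re_le (M : ℝ) :
    ∃ C, 0 ≤ C ∧ ∃ p : ℕ, ∀ w : ℂ, |w.re| ≤ M →
      ‖(Complex.Gamma w)⁻¹‖ ≤ C * (1 + |w.im|) ^ p * Real.exp (π / 2 * |w.im|) := by
  obtain ⟨q, hq⟩ := exists_nat_ge (M + 1 / 2)
  obtain ⟨C, hC, bound⟩ := exists_norm_inv_Gamma_le_of_half_sub_nat_le_re q M
  refine ⟨C, hC, q, fun w hw => bound w ⟨?_, (abs_le.1 hw).2⟩⟩
  linarith [(abs_le.1 hw).1]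

/-! ### Interlacing energy -/

section InterlacingEnergy

variable {ι κ : Type*}

/-- The excess of pair distances between two finite families of real numbers over the pair
distances within each of them. For families with `#T = #S + 1` it is nonnegative and vanishes
exactly when `a` interlaces `b`; see `integral_countingGap`. -/
def interlacingEnergy (S : Finset ι) (T : Finset κ) (a : ι → ℝ) (b : κ → ℝ) : ℝ :=
  ∑ k ∈ S, ∑ m ∈ T, |a k - b m| - (∑ k ∈ S, ∑ l ∈ S, |a k - a l|) / 2 -
    (∑ k ∈ T, ∑ l ∈ T, |b k - b l|) / 2

/-- The difference of the counting functions of the two families at `t`; it takes only the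
values `0` and `1` when `a` interlaces `b`. -/
def countingGap (S : Finset ι) (T : Finset κ) (a : ι → ℝ) (b : κ → ℝ) (t : ℝ) : ℤ :=
  #{m ∈ T | b m ≤ t} - #{k ∈ S | a k ≤ t}

/-- The unit step at `u`, evaluated at `t`. -/
def unitStep (u t : ℝ) : ℝ := if u ≤ t then 1 else 0

theorem sq_unitStep (u t : ℝ) : unitStep u t ^ 2 = unitStep u t := by
  unfold unitStep
  split_ifs <;> norm_num

theorem sum_unitStep (S : Finset ι) (a : ι → ℝ) (t : ℝ) :
    ∑ k ∈ S, unitStep (a k) t = #{k ∈ S | a k ≤ t} := by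
  simp only [unitStep, Finset.sum_boole]

theorem sq_unitStep_sub_unitStep_eq_indicator (u v : ℝ) :
    (fun t => (unitStep u t - unitStep v t) ^ 2) =
      (Set.Ico (min u v) (max u v)).indicator fun _ => 1 := by
  funext t
  simp only [unitStep, Set.indicator_apply, Set.mem_Ico, min_le_iff, lt_max_iff]
  by_cases hu : u ≤ t <;> by_cases hv : v ≤ t <;> simp [hu, hv]

theorem integrable_sq_unitStep_sub_unitStep (u v : ℝ) :
    Integrable fun t => (unitStep u t - unitStep v t) ^ 2 := by
  rw [sq_unitStep_sub_unitStep_eq_indicator, integrable_indicator_iff measurableSet_Ico]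
  simp

theorem integral_sq_unitStep_sub_unitStep (u v : ℝ) :
    ∫ t, (unitStep u t - unitStep v t) ^ 2 = |u - v| := by
  rw [sq_unitStep_sub_unitStep_eq_indicator, integral_indicator measurableSet_Ico]
  simp [max_sub_min_eq_abs']

theorem integrable_sum_sq_unitStep (S : Finset ι) (T : Finset κ) (a : ι → ℝ) (b : κ → ℝ) :
    Integrable fun t => ∑ k ∈ S, ∑ m ∈ T, (unitStep (a k) t - unitStep (b m) t) ^ 2 :=
  integrable_finsetSum _ fun _ _ => integrable_finsetSum _ fun _ _ =>
    integrable_sq_unitStep_sub_unitStep _ _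

theorem integral_sum_sq_unitStep (S : Finset ι) (T : Finset κ) (a : ι → ℝ) (b : κ → ℝ) :
    ∫ t, ∑ k ∈ S, ∑ m ∈ T, (unitStep (a k) t - unitStep (b m) t) ^ 2 =
      ∑ k ∈ S, ∑ m ∈ T, |a k - b m| := by
  simp only [integral_finsetSum _ fun _ _ => integrable_finsetSum _ fun _ _ =>
      integrable_sq_unitStep_sub_unitStep _ _,
    integral_finsetSum _ fun _ _ => integrable_sq_unitStep_sub_unitStep _ _,
    integral_sq_unitStep_sub_unitStep]

theorem sum_sq_unitStep_sub_unitStep (S : Finset ι) (T : Finset κ) (a : ι → ℝ) (b : κ → ℝ)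
    (t : ℝ) :
    ∑ k ∈ S, ∑ m ∈ T, (unitStep (a k) t - unitStep (b m) t) ^ 2 =
      #T * #{k ∈ S | a k ≤ t} + #S * #{m ∈ T | b m ≤ t} -
        2 * #{k ∈ S | a k ≤ t} * #{m ∈ T | b m ≤ t} := by
  have expand (k : ι) (m : κ) : (unitStep (a k) t - unitStep (b m) t) ^ 2 =
      unitStep (a k) t + unitStep (b m) t - 2 * (unitStep (a k) t * unitStep (b m) t) := by
    linear_combination sq_unitStep (a k) t + sq_unitStep (b m) t
  simp only [expand, Finset.sum_sub_distrib, Finset.sum_add_distrib, Finset.sum_const,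
    nsmul_eq_mul, ← Finset.mul_sum, ← Finset.sum_mul, sum_unitStep]
  ring

variable {S : Finset ι} {T : Finset κ} (a : ι → ℝ) (b : κ → ℝ)

theorem countingGap_mul_sub_one_eq (h : #T = #S + 1) (t : ℝ) :
    (countingGap S T a b t * (countingGap S T a b t - 1) : ℝ) =
      ∑ k ∈ S, ∑ m ∈ T, (unitStep (a k) t - unitStep (b m) t) ^ 2 -
        (∑ k ∈ S, ∑ l ∈ S, (unitStep (a k) t - unitStep (a l) t) ^ 2) / 2 -
        (∑ k ∈ T, ∑ l ∈ T, (unitStep (b k) t - unitStep (b l) t) ^ 2) / 2 := by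
  simp only [sum_sq_unitStep_sub_unitStep, countingGap, h]
  push_cast
  ring

theorem integrable_countingGap (h : #T = #S + 1) :
    Integrable fun t => (countingGap S T a b t * (countingGap S T a b t - 1) : ℝ) := by
  simp only [countingGap_mul_sub_one_eq a b h]
  exact ((integrable_sum_sq_unitStep S T a b).sub
    ((integrable_sum_sq_unitStep S S a a).div_const 2)).sub
      ((integrable_sum_sq_unitStep T T b b).div_const 2)

theorem integral_countingGap (h : #T = #S + 1) :
    ∫ t, (countingGap S T a b t * (countingGap S T a b t - 1) : ℝ) =
      interlacingEnergy S T a b := by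
  have hST := integrable_sum_sq_unitStep S T a b
  have hSS := (integrable_sum_sq_unitStep S S a a).div_const 2
  have hTT := (integrable_sum_sq_unitStep T T b b).div_const 2
  simp only [countingGap_mul_sub_one_eq a b h]
  rw [integral_sub (hST.sub' hSS) hTT, integral_sub hST hSS]
  simp only [integral_div, integral_sum_sq_unitStep, interlacingEnergy]

theorem int_mul_sub_one_nonneg (d : ℤ) : (0 : ℝ) ≤ d * (d - 1) := by
  have h : 0 ≤ d * (d - 1) := by
    rcases le_or_gt d 0 with hd | hd <;> nlinarith
  exact_mod_cast h

theorem interlacingEnergy_nonneg (h : #T = #S + 1) : 0 ≤ interlacingEnergy S T a b := by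
  rw [← integral_countingGap a b h]
  exact integral_nonneg fun t => int_mul_sub_one_nonneg _

theorem interlacingEnergy_neg :
    interlacingEnergy S T (fun k => -a k) (fun m => -b m) = interlacingEnergy S T a b := by
  have abs_neg_sub (x y : ℝ) : |-x - -y| = |x - y| := by rw [neg_sub_neg, abs_sub_comm]
  simp only [interlacingEnergy, abs_neg_sub]

variable {a b} {B : ℝ} {j : ι}

theorem two_le_countingGap (h : #T = #S + 1) (hb : ∀ m ∈ T, b m ≤ B) (hj : j ∈ S) {t : ℝ}
    (hBt : B ≤ t) (htj : t < a j) : 2 ≤ countingGap S T a b t := by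
  have hT : #{m ∈ T | b m ≤ t} = #T :=
    congrArg card (filter_true_of_mem fun m hm => (hb m hm).trans hBt)
  have hS : #{k ∈ S | a k ≤ t} < #S := card_lt_card (filter_ssubset.2 ⟨j, hj, not_le.2 htj⟩)
  unfold countingGap
  omega

theorem two_mul_sub_le_interlacingEnergy (h : #T = #S + 1) (hb : ∀ m ∈ T, b m ≤ B)
    (hj : j ∈ S) : 2 * (a j - B) ≤ interlacingEnergy S T a b := by
  have integral_two : ∫ t, (Set.Ico B (a j)).indicator (fun _ => (2 : ℝ)) t =
      2 * max (a j - B) 0 := by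
    rw [integral_indicator measurableSet_Ico]
    simp [mul_comm]
  calc 2 * (a j - B) ≤ 2 * max (a j - B) 0 := by gcongr; exact le_max_left _ _
    _ = ∫ t, (Set.Ico B (a j)).indicator (fun _ => (2 : ℝ)) t := integral_two.symm
    _ ≤ ∫ t, (countingGap S T a b t * (countingGap S T a b t - 1) : ℝ) := by
        refine integral_mono ?_ (integrable_countingGap a b h) fun t => ?_
        · rw [integrable_indicator_iff measurableSet_Ico]
          simp
        · refine Set.indicator_apply_le' (fun ht => ?_) fun _ => int_mul_sub_one_nonneg _
          have hgap : (2 : ℝ) ≤ countingGap S T a b t := by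
            exact_mod_cast two_le_countingGap h hb hj ht.1 ht.2
          nlinarith
    _ = interlacingEnergy S T a b := integral_countingGap a b h

theorem two_mul_abs_sub_le_interlacingEnergy (h : #T = #S + 1) (hb : ∀ m ∈ T, |b m| ≤ B)
    (hj : j ∈ S) : 2 * (|a j| - B) ≤ interlacingEnergy S T a b := by
  rcases abs_choice (a j) with ha | ha <;> rw [ha]
  · exact two_mul_sub_le_interlacingEnergy h (fun m hm => (abs_le.1 (hb m hm)).2) hj
  · rw [← interlacingEnergy_neg]
    exact two_mul_sub_le_interlacingEnergy (a := fun k => -a k) h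
      (fun m hm => neg_le.1 (abs_le.1 (hb m hm)).1) hj

end InterlacingEnergy

section PatternEnergy

variable (r : ℕ → ℕ → ℝ)

/-- The interlacing energy of the rows `n` and `n + 1` of a triangular array. -/
def rowEnergy (n : ℕ) : ℝ := interlacingEnergy (Icc 1 n) (Icc 1 (n + 1)) (r n) (r (n + 1))

/-- The exponential decay rate (in units of `π / 2`) of the Gamma factors of an integrand
indexed by a triangular array whose entries have real parts `r n j`. -/
def patternEnergy (N : ℕ) : ℝ :=
  ∑ n ∈ Icc 1 (N - 1), (∑ k ∈ Icc 1 n, ∑ m ∈ Icc 1 (n + 1), |r n k - r (n + 1) m| -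
    ∑ s ∈ Icc 1 n, ∑ p ∈ (Icc 1 n).erase s, |r n s - r n p|)

theorem rowEnergy_nonneg (n : ℕ) : 0 ≤ rowEnergy r n :=
  interlacingEnergy_nonneg _ _ (by simp)

theorem patternEnergy_eq (N : ℕ) :
    patternEnergy r N = ∑ n ∈ Icc 1 (N - 1), rowEnergy r n +
      (∑ k ∈ Icc 1 N, ∑ l ∈ Icc 1 N, |r N k - r N l|) / 2 := by
  rcases N with _ | M
  · simp [patternEnergy]
  induction M with
  | zero => simp [patternEnergy]
  | succ M ih =>
    have sum_erase_abs (s : ℕ) : ∑ p ∈ (Icc 1 (M + 1)).erase s, |r (M + 1) s - r (M + 1) p| =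
        ∑ p ∈ Icc 1 (M + 1), |r (M + 1) s - r (M + 1) p| := sum_erase _ (by simp)
    simp only [patternEnergy, Nat.add_sub_cancel] at ih ⊢
    rw [sum_Icc_succ_top (by omega), ih, sum_Icc_succ_top (by omega) (rowEnergy r)]
    simp only [sum_erase_abs, rowEnergy, interlacingEnergy]
    ring

theorem sum_rowEnergy_le_patternEnergy (N : ℕ) :
    ∑ n ∈ Icc 1 (N - 1), rowEnergy r n ≤ patternEnergy r N := by
  rw [patternEnergy_eq]
  exact le_add_of_nonneg_right (by positivity)

theorem patternEnergy_nonneg (N : ℕ) : 0 ≤ patternEnergy r N :=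
  (sum_nonneg fun n _ => rowEnergy_nonneg r n).trans (sum_rowEnergy_le_patternEnergy r N)

variable {r} {N : ℕ} {B : ℝ}

theorem abs_le_add_sum_rowEnergy (hB : ∀ m ∈ Icc 1 N, |r N m| ≤ B) {n : ℕ} (hn : n ≤ N) :
    ∀ j ∈ Icc 1 n, |r n j| ≤ B + (∑ m ∈ Ico n N, rowEnergy r m) / 2 := by
  induction hn using Nat.decreasingInduction with
  | self => simpa using hB
  | of_succ n hn ih =>
    intro j hj
    have h : 2 * (|r n j| - _) ≤ rowEnergy r n :=
      two_mul_abs_sub_le_interlacingEnergy (by simp) ih hj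
    rw [sum_eq_sum_Ico_succ_bot hn]
    linarith

theorem two_mul_abs_sub_le_patternEnergy (hB : ∀ m ∈ Icc 1 N, |r N m| ≤ B) {n j : ℕ}
    (hn : n ≤ N - 1) (hj : j ∈ Icc 1 n) : 2 * (|r n j| - B) ≤ patternEnergy r N := by
  have hrow := abs_le_add_sum_rowEnergy hB (hn.trans (N.sub_le 1)) j hj
  have hsub : ∑ m ∈ Ico n N, rowEnergy r m ≤ ∑ m ∈ Icc 1 (N - 1), rowEnergy r m := by
    refine sum_le_sum_of_subset_of_nonneg (fun m => ?_) fun m _ _ => rowEnergy_nonneg r m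
    simp only [mem_Ico, mem_Icc] at hj ⊢
    omega
  linarith [sum_rowEnergy_le_patternEnergy r N]

end PatternEnergy

/-! ### Rapid decay and contour shifts -/

section RapidDecay

variable {E : Type*} [NormedAddCommGroup E]

/-- A continuous function decaying faster than every power of the norm. No smoothness is asked
for, unlike for Schwartz functions. -/
structure RapidlyDecaying (f : E → ℂ) : Prop where
  continuous : Continuous f
  decay : ∀ k : ℕ, ∃ C, ∀ x, ‖f x‖ * (1 + ‖x‖) ^ k ≤ C

theorem RapidlyDecaying.mul {c d : E → ℂ} (hc : RapidlyDecaying c) (hd : Continuous d) {A : ℝ}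
    {k : ℕ} (hA : ∀ x, ‖d x‖ ≤ A * (1 + ‖x‖) ^ k) : RapidlyDecaying fun x => d x * c x := by
  refine ⟨hd.mul hc.continuous, fun j => ?_⟩
  obtain ⟨C, hC⟩ := hc.decay (k + j)
  refine ⟨|A| * C, fun x => ?_⟩
  calc ‖d x * c x‖ * (1 + ‖x‖) ^ j
      ≤ |A| * (1 + ‖x‖) ^ k * ‖c x‖ * (1 + ‖x‖) ^ j := by
        rw [norm_mul]
        gcongr
        exact (hA x).trans (by gcongr; exact le_abs_self A)
    _ = |A| * (‖c x‖ * (1 + ‖x‖) ^ (k + j)) := by ring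
    _ ≤ |A| * C := by gcongr; exact hC x

variable [NormedSpace ℝ E] [FiniteDimensional ℝ E] [MeasurableSpace E] [BorelSpace E]
  {μ : Measure E} [μ.IsAddHaarMeasure]

theorem integrable_of_norm_mul_one_add_norm_pow_le {f : E → ℂ} (hf : Continuous f) {k : ℕ}
    (hk : Module.finrank ℝ E < k) {C : ℝ} (hC : ∀ x, ‖f x‖ * (1 + ‖x‖) ^ k ≤ C) :
    Integrable f μ := by
  have hk' : (Module.finrank ℝ E : ℝ) < k := by exact_mod_cast hk
  refine ((integrable_one_add_norm hk').const_mul C).mono' hf.aestronglyMeasurable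
    (.of_forall fun x => ?_)
  have hpos : 0 < 1 + ‖x‖ := by positivity
  rw [Real.rpow_neg hpos.le, Real.rpow_natCast, ← div_eq_mul_inv, le_div_iff₀ (pow_pos hpos k)]
  exact hC x

theorem RapidlyDecaying.integrable {f : E → ℂ} (hf : RapidlyDecaying f) : Integrable f μ :=
  let ⟨_, hC⟩ := hf.decay (Module.finrank ℝ E + 1)
  integrable_of_norm_mul_one_add_norm_pow_le hf.continuous (Nat.lt_succ_self _) hC

end RapidDecay

section ContourShift

open Filter Topology Interval

theorem tendsto_integral_vertical_segment {g : ℂ → ℂ} {h C : ℝ} (hh : 0 ≤ h)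
    (bound : ∀ t s : ℝ, s ∈ Set.Icc 0 h → ‖g (t + s * I)‖ * (1 + |t|) ^ 2 ≤ C)
    {ε : ℝ} (hε : |ε| = 1) :
    Tendsto (fun R : ℝ => ∫ y in (0 : ℝ)..h, g ((ε * R : ℝ) + y * I)) atTop (𝓝 0) := by
  have hlim : Tendsto (fun R : ℝ => C / (1 + R) * |h - 0|) atTop (𝓝 0) := by
    simpa using (Tendsto.const_div_atTop (tendsto_atTop_add_const_left _ 1 tendsto_id) C).mul_const
      |h - 0|
  refine squeeze_zero_norm' ?_ hlim
  filter_upwards [eventually_ge_atTop 0] with R hR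
  refine intervalIntegral.norm_integral_le_of_norm_le_const fun y hy => ?_
  rw [Set.uIoc_of_le hh] at hy
  have hy' := bound (ε * R) y (Set.Ioc_subset_Icc_self hy)
  rw [abs_mul, hε, one_mul, abs_of_nonneg hR] at hy'
  rw [le_div_iff₀ (by positivity)]
  refine le_trans ?_ hy'
  gcongr
  exact le_self_pow₀ (by linarith) two_ne_zero

theorem integral_eq_integral_add_mul_I {g : ℂ → ℂ} {h C : ℝ} (hh : 0 ≤ h)
    (hg : DifferentiableOn ℂ g {z | z.im ∈ Set.Icc 0 h})
    (bound : ∀ t s : ℝ, s ∈ Set.Icc 0 h → ‖g (t + s * I)‖ * (1 + |t|) ^ 2 ≤ C) :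
    ∫ t : ℝ, g t = ∫ t : ℝ, g (t + h * I) := by
  have hintegrable (s : ℝ) (hs : s ∈ Set.Icc 0 h) : Integrable fun t : ℝ => g (t + s * I) :=
    integrable_of_norm_mul_one_add_norm_pow_le
      (hg.continuousOn.comp_continuous (by fun_prop) fun t => by simpa using hs)
      (k := 2) (by simp) fun t => bound t s hs
  have hlower := intervalIntegral_tendsto_integral (hintegrable 0 (Set.left_mem_Icc.2 hh))
    tendsto_neg_atTop_atBot tendsto_id
  have hupper := intervalIntegral_tendsto_integral (hintegrable h (Set.right_mem_Icc.2 hh))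
    tendsto_neg_atTop_atBot tendsto_id
  have hrect (R : ℝ) : (∫ x in (-R)..R, g (x + (0 : ℝ) * I)) - (∫ x in (-R)..R, g (x + h * I)) +
      I • (∫ y in (0 : ℝ)..h, g ((1 * R : ℝ) + y * I)) -
      I • (∫ y in (0 : ℝ)..h, g ((-1 * R : ℝ) + y * I)) = 0 := by
    have hsub : ([[(-R : ℂ).re, (R + h * I : ℂ).re]] ×ℂ [[(-R : ℂ).im, (R + h * I : ℂ).im]]) ⊆
        {z | z.im ∈ Set.Icc 0 h} := fun z hz => by
      simpa [Set.uIcc_of_le hh] using (Complex.mem_reProdIm.1 hz).2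
    simpa using Complex.integral_boundary_rect_eq_zero_of_differentiableOn g _ _ (hg.mono hsub)
  have hlim := ((hlower.sub hupper).add
    ((tendsto_integral_vertical_segment hh bound (abs_one)).const_smul I)).sub
    ((tendsto_integral_vertical_segment hh bound (abs_neg (1 : ℝ) ▸ abs_one)).const_smul I)
  have hzero := tendsto_nhds_unique (hlim.congr hrect) tendsto_const_nhds
  simpa [sub_eq_zero] using hzero

variable {ι : Type*} [Fintype ι] [DecidableEq ι]

theorem integral_pi_eq_integral_integral (i₀ : ι) {f : (ι → ℝ) → ℂ} (hf : Integrable f) :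
    ∫ ξ, f ξ = ∫ y : {i // i ≠ i₀} → ℝ, ∫ t : ℝ, f fun i => if h : i = i₀ then t else y ⟨i, h⟩ := by
  let e := (MeasurableEquiv.piEquivPiSubtypeProd (fun _ : ι => ℝ) (· = i₀)).symm
  have he : MeasurePreserving e volume volume := by
    convert (volume_preserving_piEquivPiSubtypeProd (fun _ : ι => ℝ) (· = i₀)).symm <;> rfl
  have hunique : MeasurePreserving (MeasurableEquiv.funUnique {i // i = i₀} ℝ).symm volume volume :=
    (volume_preserving_funUnique {i // i = i₀} ℝ).symm
  have hfe : Integrable (fun p => f (e p)) (volume.prod volume) :=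
    (he.integrable_comp_emb e.measurableEmbedding).2 hf
  calc ∫ ξ, f ξ = ∫ p, f (e p) ∂(volume.prod volume) := (he.integral_comp' f).symm
    _ = ∫ y, ∫ z, f (e (z, y)) := integral_prod_symm _ hfe
    _ = ∫ y : {i // i ≠ i₀} → ℝ, ∫ t : ℝ, f (e ((MeasurableEquiv.funUnique _ ℝ).symm t, y)) := by
        congr 1
        funext y
        exact (hunique.integral_comp' fun z => f (e (z, y))).symm
    _ = _ := rfl

theorem integral_pi_eq_integral_pi_mul_I (i₀ : ι) {U : (ι → ℝ) → ℂ → ℂ} {h : ℝ} (hh : 0 ≤ h)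
    (translate : ∀ ξ (t : ℝ) ζ, U (ξ + Pi.single i₀ t) ζ = U ξ (ζ + t))
    (hU : ∀ ξ, DifferentiableOn ℂ (U ξ) {z | z.im ∈ Set.Icc 0 h})
    (hcont : ∀ s ∈ Set.Icc 0 h, Continuous fun ξ => U ξ (s * I))
    (decay : ∀ k : ℕ, ∃ C, ∀ ξ, ∀ s ∈ Set.Icc 0 h, ‖U ξ (s * I)‖ * (1 + ‖ξ‖) ^ k ≤ C) :
    ∫ ξ, U ξ 0 = ∫ ξ, U ξ (h * I) := by
  have hintegrable (s : ℝ) (hs : s ∈ Set.Icc 0 h) : Integrable fun ξ => U ξ (s * I) :=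
    RapidlyDecaying.integrable ⟨hcont s hs, fun k =>
      let ⟨C, hC⟩ := decay k
      ⟨C, fun ξ => hC ξ s hs⟩⟩
  have hintegrable_zero : Integrable fun ξ => U ξ 0 := by
    simpa using hintegrable 0 (Set.left_mem_Icc.2 hh)
  rw [integral_pi_eq_integral_integral i₀ hintegrable_zero,
    integral_pi_eq_integral_integral i₀ (hintegrable h (Set.right_mem_Icc.2 hh))]
  congr 1
  funext y
  let line (t : ℝ) : ι → ℝ := fun i => if h : i = i₀ then t else y ⟨i, h⟩
  have U_line (t : ℝ) (ζ : ℂ) : U (line t) ζ = U (line 0) (t + ζ) := by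
    have hline : line t = line 0 + Pi.single i₀ t := by
      funext i
      by_cases hi : i = i₀ <;> simp [line, hi]
    rw [hline, translate, add_comm]
  obtain ⟨C, hC⟩ := decay 2
  have hshift : ∫ t : ℝ, U (line 0) t = ∫ t : ℝ, U (line 0) (t + h * I) := by
    refine integral_eq_integral_add_mul_I hh (hU (line 0)) (C := C) fun t s hs => ?_
    rw [← U_line]
    refine le_trans ?_ (hC (line t) s hs)
    gcongr
    simpa [line] using norm_le_pi_norm (line t) i₀
  calc ∫ t, U (line t) 0 = ∫ t : ℝ, U (line 0) t := by
        congr 1; funext t; rw [U_line, add_zero]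
    _ = ∫ t : ℝ, U (line 0) (t + h * I) := hshift
    _ = ∫ t, U (line t) (h * I) := by
        congr 1; funext t; exact (U_line t _).symm

end ContourShift

/-! ### Exponential integrals with rapidly decaying coefficient -/

section ExpIntegral

variable {κ : Type*}

/-- The `i`-th coordinate of a real vector, as a complex-valued real-linear map. -/
def coordinateCLM (i : κ) : (κ → ℝ) →L[ℝ] ℂ :=
  Complex.ofRealCLM.comp (ContinuousLinearMap.proj i)

section Fintype

variable [Fintype κ]

theorem norm_cexp_sum_mul_ofReal_le {d : κ → ℂ} {B : ℝ} (hB : ∀ i, |(d i).re| ≤ B) (x : κ → ℝ) :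
    ‖Complex.exp (∑ i, d i * x i)‖ ≤ Real.exp (Fintype.card κ * (|B| * ‖x‖)) := by
  rw [Complex.norm_exp, Real.exp_le_exp, Complex.re_sum]
  calc ∑ i, (d i * x i).re ≤ ∑ _i : κ, |B| * ‖x‖ := by
        refine sum_le_sum fun i _ => ?_
        rw [Complex.re_mul_ofReal]
        refine (le_abs_self _).trans ?_
        rw [abs_mul]
        exact mul_le_mul ((hB i).trans (le_abs_self B)) (norm_le_pi_norm x i) (abs_nonneg _)
          (abs_nonneg _)
    _ = Fintype.card κ * (|B| * ‖x‖) := by simp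

theorem hasFDerivAt_mul_cexp_sum_mul_ofReal (c : ℂ) (d : κ → ℂ) (x : κ → ℝ) :
    HasFDerivAt (fun y : κ → ℝ => c * Complex.exp (∑ i, d i * y i))
      (∑ i, (d i * c * Complex.exp (∑ i, d i * x i)) • coordinateCLM i) x := by
  have hsum : HasFDerivAt (fun y : κ → ℝ => ∑ i, d i * (y i : ℂ)) (∑ i, d i • coordinateCLM i) x :=
    HasFDerivAt.fun_sum fun i _ => (coordinateCLM i).hasFDerivAt.const_mul (d i)
  refine (hsum.cexp.const_mul c).congr_fderiv ?_
  simp only [smul_sum, smul_smul]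
  exact sum_congr rfl fun i _ => congrArg (· • coordinateCLM i) (by ring)

end Fintype

variable {E : Type*} [NormedAddCommGroup E]

/-- Families of exponents `D` for which `∫ c ξ * exp (∑ i, D i ξ * x i)` may be differentiated
under the integral sign whenever `c` decays rapidly. -/
structure TameExponents (D : κ → E → ℂ) : Prop where
  continuous : ∀ i, Continuous (D i)
  growth : ∃ A, ∃ k : ℕ, ∀ i ξ, ‖D i ξ‖ ≤ A * (1 + ‖ξ‖) ^ k
  re_bounded : ∃ B, ∀ i ξ, |(D i ξ).re| ≤ B

namespace TameExponents

variable {D : κ → E → ℂ} {c : E → ℂ}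

theorem rapidlyDecaying_mul (hD : TameExponents D) (hc : RapidlyDecaying c) (i : κ) :
    RapidlyDecaying fun ξ => D i ξ * c ξ :=
  let ⟨_, _, hA⟩ := hD.growth
  hc.mul (hD.continuous i) (hA i)

variable [Fintype κ] [NormedSpace ℝ E] [FiniteDimensional ℝ E] [MeasurableSpace E] [BorelSpace E]
  {μ : Measure E} [μ.IsAddHaarMeasure]

theorem integrable (hD : TameExponents D) (hc : RapidlyDecaying c) (x : κ → ℝ) :
    Integrable (fun ξ => c ξ * Complex.exp (∑ i, D i ξ * x i)) μ := by
  obtain ⟨B, hB⟩ := hD.re_bounded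
  have hcont : Continuous fun ξ => Complex.exp (∑ i, D i ξ * x i) := by
    have := hD.continuous
    fun_prop
  have h := hc.mul (k := 0) hcont fun ξ => by simpa using norm_cexp_sum_mul_ofReal_le (hB · ξ) x
  simpa only [mul_comm] using h.integrable (μ := μ)

end TameExponents

variable [Fintype κ] [MeasurableSpace E]

/-- The function of `x` with amplitude `c` and exponents `D`. -/
def expIntegral (μ : Measure E) (D : κ → E → ℂ) (c : E → ℂ) (x : κ → ℝ) : ℂ :=
  ∫ ξ, c ξ * Complex.exp (∑ i, D i ξ * x i) ∂μ

variable [NormedSpace ℝ E] [FiniteDimensional ℝ E] [BorelSpace E]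
  {μ : Measure E} [μ.IsAddHaarMeasure] {D : κ → E → ℂ} {c : E → ℂ}

theorem hasFDerivAt_expIntegral (hD : TameExponents D) (hc : RapidlyDecaying c) (x : κ → ℝ) :
    HasFDerivAt (expIntegral μ D c)
      (∑ i, expIntegral μ D (fun ξ => D i ξ * c ξ) x • coordinateCLM i) x := by
  have hDc := hD.rapidlyDecaying_mul hc
  obtain ⟨B, hB⟩ := hD.re_bounded
  have hintegrable (i : κ) : Integrable (fun ξ =>
      (D i ξ * c ξ * Complex.exp (∑ i, D i ξ * x i)) • coordinateCLM i) μ :=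
    (hD.integrable (hDc i) x).smul_const _
  have hderiv : ∑ i, expIntegral μ D (fun ξ => D i ξ * c ξ) x • coordinateCLM i =
      ∫ ξ, ∑ i, (D i ξ * c ξ * Complex.exp (∑ i, D i ξ * x i)) • coordinateCLM i ∂μ := by
    rw [integral_finsetSum _ fun i _ => hintegrable i]
    refine sum_congr rfl fun i _ => ?_
    rw [integral_smul_const]
    rfl
  rw [hderiv]
  apply hasFDerivAt_integral_of_dominated_of_fderiv_le (s := Metric.ball x 1)
    (F' := fun x ξ => ∑ i, (D i ξ * c ξ * Complex.exp (∑ i, D i ξ * x i)) • coordinateCLM i)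
    (bound := fun ξ => ∑ i, ‖D i ξ * c ξ‖ * Real.exp (Fintype.card κ * (|B| * (‖x‖ + 1))) *
      ‖coordinateCLM i‖)
  · exact Metric.ball_mem_nhds x one_pos
  · exact Filter.Eventually.of_forall fun y => (hD.integrable hc y).aestronglyMeasurable
  · exact hD.integrable hc x
  · have := hD.continuous
    have := hc.continuous
    exact Continuous.aestronglyMeasurable (by fun_prop)
  · refine Filter.Eventually.of_forall fun ξ y hy => ?_
    refine (norm_sum_le _ _).trans (sum_le_sum fun i _ => ?_)
    rw [norm_smul, norm_mul]
    gcongr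
    refine (norm_cexp_sum_mul_ofReal_le (hB · ξ) y).trans (Real.exp_le_exp.2 ?_)
    gcongr
    rw [mem_ball_iff_norm] at hy
    linarith [norm_le_norm_add_norm_sub' y x]
  · exact integrable_finsetSum _ fun i _ => ((hDc i).integrable.norm.mul_const _).mul_const _
  · exact Filter.Eventually.of_forall fun ξ y _ =>
      hasFDerivAt_mul_cexp_sum_mul_ofReal (c ξ) (D · ξ) y

theorem contDiff_expIntegral (n : ℕ) (hD : TameExponents D) (hc : RapidlyDecaying c) :
    ContDiff ℝ n (expIntegral μ D c) := by
  induction n generalizing c with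
  | zero =>
    rw [Nat.cast_zero, contDiff_zero]
    exact continuous_iff_continuousAt.2 fun x => (hasFDerivAt_expIntegral hD hc x).continuousAt
  | succ n ih =>
    rw [Nat.cast_succ, contDiff_succ_iff_hasFDerivAt]
    exact ⟨_, ContDiff.sum fun i _ => (ih (hD.rapidlyDecaying_mul hc i)).smul contDiff_const,
      hasFDerivAt_expIntegral hD hc⟩

theorem fderiv_expIntegral_single [DecidableEq κ] (hD : TameExponents D) (hc : RapidlyDecaying c)
    (x : κ → ℝ) (i : κ) :
    fderiv ℝ (expIntegral μ D c) x (Pi.single i 1) =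
      expIntegral μ D (fun ξ => D i ξ * c ξ) x := by
  rw [(hasFDerivAt_expIntegral hD hc x).fderiv]
  simp [coordinateCLM, Pi.single_apply, apply_ite]

end ExpIntegral

/-! ### Lagrange sums -/

section LagrangeSum

variable {F ι κ : Type*} [Field F] [DecidableEq ι] {s : Finset ι} {T : Finset κ} {v : ι → F}

/-- The divided difference, at the nodes `v j`, `j ∈ s`, of the polynomial with roots `b m`,
`m ∈ T`. -/
def lagrangeSum (s : Finset ι) (T : Finset κ) (v : ι → F) (b : κ → F) : F :=
  ∑ j ∈ s, (∏ m ∈ T, (v j - b m)) / ∏ p ∈ s.erase j, (v j - v p)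

theorem lagrangeSum_eq_one (hv : Set.InjOn v s) (hcard : #s = #T + 1) (b : κ → F) :
    lagrangeSum s T v b = 1 := by
  let P : Polynomial F := ∏ m ∈ T, (Polynomial.X - Polynomial.C (b m))
  have hP : P.Monic := Polynomial.monic_prod_X_sub_C b T
  have hdeg : (#s : WithBot ℕ) = P.degree + 1 := by
    rw [Polynomial.degree_eq_natDegree hP.ne_zero, Polynomial.natDegree_finsetProd_X_sub_C_eq_card,
      hcard, Nat.cast_succ]
  rw [lagrangeSum, ← hP.leadingCoeff, Lagrange.leadingCoeff_eq_sum hv hdeg]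
  simp [P, Polynomial.eval_prod]

theorem lagrangeSum_insert_insert [DecidableEq κ] {q : ι} {c : κ} (hq : q ∉ s) (hc : c ∉ T)
    (hv : Set.InjOn v (insert q s : Finset ι)) (b : κ → F) :
    lagrangeSum (insert q s) (insert c T) v b =
      lagrangeSum s T v b + (v q - b c) * lagrangeSum (insert q s) T v b := by
  have hsplit (j : ι) : ∏ m ∈ insert c T, (v j - b m) =
      (v j - v q) * (∏ m ∈ T, (v j - b m)) + (v q - b c) * ∏ m ∈ T, (v j - b m) := by
    rw [prod_insert hc]
    ring
  have hcancel : ∑ j ∈ insert q s, (v j - v q) * (∏ m ∈ T, (v j - b m)) /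
      ∏ p ∈ (insert q s).erase j, (v j - v p) = lagrangeSum s T v b := by
    rw [sum_insert hq, sub_self, zero_mul, zero_div, zero_add]
    refine sum_congr rfl fun j hj => ?_
    have hjq : j ≠ q := ne_of_mem_of_not_mem hj hq
    have hne : v j - v q ≠ 0 := sub_ne_zero.2 (hv.ne (by simp [hj]) (by simp) hjq)
    rw [erase_insert_of_ne hjq.symm, prod_insert (by simp [hq]), mul_div_mul_left _ _ hne]
  rw [← hcancel, lagrangeSum, lagrangeSum, mul_sum, ← sum_add_distrib]
  refine sum_congr rfl fun j _ => ?_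
  rw [hsplit, add_div, mul_div_assoc (v q - b c)]

theorem lagrangeSum_eq_sum_sub_sum (hv : Set.InjOn v s) (hcard : #s = #T) (b : κ → F) :
    lagrangeSum s T v b = ∑ j ∈ s, v j - ∑ m ∈ T, b m := by
  classical
  induction s using Finset.induction_on generalizing T with
  | empty =>
    obtain rfl : T = ∅ := by simpa [eq_comm] using hcard
    simp [lagrangeSum]
  | insert q s hq ih =>
    rw [card_insert_of_notMem hq] at hcard
    obtain ⟨c, T, hc, rfl, hT⟩ := Finset.card_eq_succ.1 hcard.symm
    rw [lagrangeSum_insert_insert hq hc hv, ih (hv.mono (by simp)) hT.symm,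
      lagrangeSum_eq_one hv (by rw [card_insert_of_notMem hq, hT]), sum_insert hq, sum_insert hc]
    ring

theorem two_mul_lagrangeSum (hv : Set.InjOn v s) (hcard : #s + 1 = #T) (b : κ → F) :
    2 * lagrangeSum s T v b =
      (∑ m ∈ T, b m - ∑ j ∈ s, v j) ^ 2 - ∑ m ∈ T, b m ^ 2 + ∑ j ∈ s, v j ^ 2 := by
  classical
  induction s using Finset.induction_on generalizing T with
  | empty =>
    obtain ⟨c, rfl⟩ := Finset.card_eq_one.1 hcard.symm
    simp [lagrangeSum]
  | insert q s hq ih =>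
    obtain ⟨c, T, hc, rfl, hT⟩ := Finset.card_eq_succ.1 hcard.symm
    rw [lagrangeSum_insert_insert hq hc hv, mul_add,
      ih (hv.mono (by simp)) (by rw [hT, card_insert_of_notMem hq]),
      lagrangeSum_eq_sum_sub_sum hv hT.symm]
    simp only [sum_insert hq, sum_insert hc]
    ring

end LagrangeSum

/-! ### Marked integrands -/

section MarkedIntegrand

/-- The array with entry `1` at `(n₀, j₀)` and `0` elsewhere. -/
def unitArray (n₀ j₀ : ℕ) : GZ := fun n j => if n = n₀ ∧ j = j₀ then 1 else 0

/-- The argument `(u - v) / (iℏ)` of the Gamma factors. -/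
def scaledDiff (ℏ : ℝ) (u v : ℂ) : ℂ := (u - v) / (I * ℏ)

/-- The product of the factors `ℏ ^ ((γ_{nk} - γ_{n+1,m}) / (iℏ))` of the integrand. -/
def hpowFactor (ℏ : ℝ) (N : ℕ) (γ : GZ) : ℂ :=
  ∏ n ∈ Icc 1 (N - 1), ∏ k ∈ Icc 1 n, ∏ m ∈ Icc 1 (n + 1),
    hpow ℏ (scaledDiff ℏ (γ n k) (γ (n + 1) m))

/-- The product of the Gamma factors coupling consecutive rows, the argument being raised by
`e_{n+1,m}`. -/
def gammaFactor (ℏ : ℝ) (N : ℕ) (e γ : GZ) : ℂ :=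
  ∏ n ∈ Icc 1 (N - 1), ∏ k ∈ Icc 1 n, ∏ m ∈ Icc 1 (n + 1),
    Complex.Gamma (scaledDiff ℏ (γ n k) (γ (n + 1) m) + e (n + 1) m)

/-- The product of the reciprocal Gamma factors inside the rows, the argument being raised by
`e_{ns}`. -/
def invGammaFactor (ℏ : ℝ) (N : ℕ) (e γ : GZ) : ℂ :=
  ∏ n ∈ Icc 1 (N - 1), ∏ s ∈ Icc 1 n, ∏ p ∈ (Icc 1 n).erase s,
    (Complex.Gamma (scaledDiff ℏ (γ n s) (γ n p) + e n s))⁻¹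

/-- The momentum `∑ j, γ_{nj} - ∑ j, γ_{n-1,j}` conjugate to `x_n`. -/
def momentum (γ : GZ) (n : ℕ) : ℂ := (∑ j ∈ Icc 1 n, γ n j) - ∑ j ∈ Icc 1 (n - 1), γ (n - 1) j

/-- The exponential factor of the integrand. -/
def planeWave (ℏ : ℝ) (N : ℕ) (x : ℕ → ℝ) (γ : GZ) : ℂ :=
  Complex.exp ((I / (ℏ : ℂ)) * ∑ n ∈ Icc 1 N, momentum γ n * (x n : ℂ))

/-- The Toda integrand with the arguments of its Gamma factors raised by the marking `e`. Marking a
single entry `(n, j)` multiplies the integrand by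
`± ∏ m, (γ_{nj} - γ_{n-1,m}) / ∏ p ≠ j, (γ_{nj} - γ_{np})`, with the poles of that quotient
removed. -/
def markedIntegrand (ℏ : ℝ) (N : ℕ) (x : ℕ → ℝ) (e γ : GZ) : ℂ :=
  hpowFactor ℏ N γ * gammaFactor ℏ N e γ * invGammaFactor ℏ N e γ * planeWave ℏ N x γ

theorem markedIntegrand_zero (ℏ : ℝ) (N : ℕ) (x : ℕ → ℝ) (γ : GZ) :
    markedIntegrand ℏ N x 0 γ = todaIntegrand ℏ N x γ := by
  simp only [todaIntegrand, markedIntegrand, hpowFactor, gammaFactor, invGammaFactor, planeWave,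
    momentum, scaledDiff, Pi.zero_apply, add_zero, prod_inv_distrib, div_eq_mul_inv,
    prod_mul_distrib]

theorem unitArray_self (n j : ℕ) : unitArray n j n j = 1 := by simp [unitArray]

theorem unitArray_of_row_ne {n₀ n : ℕ} (h : n ≠ n₀) (j₀ j : ℕ) : unitArray n₀ j₀ n j = 0 := by
  simp [unitArray, h]

theorem unitArray_of_col_ne {j₀ j : ℕ} (h : j ≠ j₀) (n₀ n : ℕ) : unitArray n₀ j₀ n j = 0 := by
  simp [unitArray, h]

theorem sum_unitArray {n₀ j₀ : ℕ} (hj₀ : j₀ ∈ Icc 1 n₀) (n : ℕ) :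
    ∑ j ∈ Icc 1 n, unitArray n₀ j₀ n j = if n = n₀ then 1 else 0 := by
  split_ifs with h
  · subst h
    rw [sum_eq_single_of_mem j₀ hj₀ fun j _ hj => unitArray_of_col_ne hj _ _, unitArray_self]
  · exact sum_eq_zero fun j _ => unitArray_of_row_ne h _ _

theorem neg_scaledDiff (ℏ : ℝ) (u v : ℂ) : -scaledDiff ℏ u v = scaledDiff ℏ v u := by
  rw [scaledDiff, scaledDiff, ← neg_div, neg_sub]

theorem prod_scaledDiff {ι : Type*} (ℏ : ℝ) (s : Finset ι) (u : ℂ) (v : ι → ℂ) :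
    ∏ i ∈ s, scaledDiff ℏ u (v i) = (∏ i ∈ s, (u - v i)) / (I * ℏ) ^ #s := by
  simp only [scaledDiff, prod_div_distrib, prod_const]

theorem momentum_add_smul (γ e : GZ) (ζ : ℂ) (n : ℕ) :
    momentum (γ + ζ • e) n = momentum γ n + ζ * momentum e n := by
  simp only [momentum, Pi.add_apply, Pi.smul_apply, smul_eq_mul, sum_add_distrib, mul_sub, mul_sum]
  ring

theorem momentum_unitArray {r j : ℕ} (hj : j ∈ Icc 1 (r + 1)) (n : ℕ) :
    momentum (unitArray (r + 1) j) n =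
      (if n = r + 1 then 1 else 0) - if n = r + 2 then 1 else 0 := by
  have hpred : n - 1 = r + 1 ↔ n = r + 2 := by lia
  simp only [momentum, sum_unitArray hj, hpred]

section Shift

variable {ℏ : ℝ}

theorem I_mul_ofReal_ne_zero (hℏ : 0 < ℏ) : I * (ℏ : ℂ) ≠ 0 :=
  mul_ne_zero Complex.I_ne_zero (Complex.ofReal_ne_zero.2 hℏ.ne')

theorem scaledDiff_ne_zero (hℏ : 0 < ℏ) {u v : ℂ} (huv : u ≠ v) : scaledDiff ℏ u v ≠ 0 :=
  div_ne_zero (sub_ne_zero.2 huv) (I_mul_ofReal_ne_zero hℏ)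

theorem scaledDiff_add_smul (hℏ : 0 < ℏ) (γ e : GZ) (n k n' m : ℕ) :
    scaledDiff ℏ ((γ + (I * ℏ : ℂ) • e) n k) ((γ + (I * ℏ : ℂ) • e) n' m) =
      scaledDiff ℏ (γ n k) (γ n' m) + e n k - e n' m := by
  have hℏ' : (ℏ : ℂ) ≠ 0 := Complex.ofReal_ne_zero.2 hℏ.ne'
  simp only [scaledDiff, Pi.add_apply, Pi.smul_apply, smul_eq_mul]
  field_simp
  ring

theorem hpow_add (ℏ : ℝ) (z w : ℂ) : hpow ℏ (z + w) = hpow ℏ z * hpow ℏ w := by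
  rw [hpow, add_mul, Complex.exp_add, hpow, hpow]

theorem hpow_sum {ι : Type*} (ℏ : ℝ) (s : Finset ι) (f : ι → ℂ) :
    hpow ℏ (∑ i ∈ s, f i) = ∏ i ∈ s, hpow ℏ (f i) := by
  simp only [hpow, ← Complex.exp_sum, sum_mul]

theorem hpow_natCast (hℏ : 0 < ℏ) (n : ℕ) : hpow ℏ n = (ℏ : ℂ) ^ n := by
  rw [hpow, Complex.exp_nat_mul, ← Complex.ofReal_exp, Real.exp_log hℏ]

variable {N r j : ℕ} (hr : r + 1 < N) (hj : j ∈ Icc 1 (r + 1))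

include hr hj

theorem sum_unitArray_sub_unitArray :
    ∑ n ∈ Icc 1 (N - 1), ∑ k ∈ Icc 1 n, ∑ m ∈ Icc 1 (n + 1),
      (unitArray (r + 1) j n k - unitArray (r + 1) j (n + 1) m) = 2 := by
  have hupper : r + 1 ∈ Icc 1 (N - 1) := by rw [mem_Icc]; lia
  have hlower : (if r ∈ Icc 1 (N - 1) then (r : ℂ) else 0) = r := by
    rw [ite_eq_left_iff, mem_Icc]
    intro h
    obtain rfl : r = 0 := by lia
    simp
  simp only [sum_sub_distrib, sum_const, Nat.card_Icc, Nat.add_sub_cancel, nsmul_eq_mul,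
    ← mul_sum, sum_unitArray hj, add_left_inj, mul_ite, mul_one, mul_zero, sum_ite_eq', hupper,
    if_true, hlower]
  push_cast
  ring

theorem hpowFactor_shift (hℏ : 0 < ℏ) (γ : GZ) :
    hpowFactor ℏ N (γ + (I * ℏ : ℂ) • unitArray (r + 1) j) = (ℏ : ℂ) ^ 2 * hpowFactor ℏ N γ := by
  rw [mul_comm ((ℏ : ℂ) ^ 2), ← hpow_natCast hℏ 2, Nat.cast_ofNat,
    ← sum_unitArray_sub_unitArray hr hj]
  simp only [hpowFactor, hpow_sum, ← prod_mul_distrib, ← hpow_add, scaledDiff_add_smul hℏ,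
    add_sub_assoc]

theorem planeWave_shift (hℏ : 0 < ℏ) (x : ℕ → ℝ) (γ : GZ) :
    planeWave ℏ N x (γ + (I * ℏ : ℂ) • unitArray (r + 1) j) =
      Complex.exp (-((x (r + 1) : ℂ) - x (r + 2))) * planeWave ℏ N x γ := by
  have hupper : r + 1 ∈ Icc 1 N := by rw [mem_Icc]; lia
  have hlower : r + 2 ∈ Icc 1 N := by rw [mem_Icc]; lia
  have hℏ' : (ℏ : ℂ) ≠ 0 := Complex.ofReal_ne_zero.2 hℏ.ne'
  have hsum : ∑ n ∈ Icc 1 N, momentum (γ + (I * ℏ : ℂ) • unitArray (r + 1) j) n * (x n : ℂ) =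
      ∑ n ∈ Icc 1 N, momentum γ n * (x n : ℂ) + I * ℏ * (x (r + 1) - x (r + 2)) := by
    simp only [momentum_add_smul, momentum_unitArray hj, add_mul, sum_add_distrib, mul_assoc,
      ← mul_sum, sub_mul, ite_mul, one_mul, zero_mul, sum_sub_distrib, sum_ite_eq', hupper, hlower,
      if_true]
  rw [planeWave, planeWave, ← Complex.exp_add, hsum]
  congr 1
  field_simp
  linear_combination (ℏ : ℂ) * (x (r + 1) - x (r + 2)) * Complex.I_sq

end Shift

end MarkedIntegrand

theorem prod_eq_prod_mul_of_mem {ι M : Type*} [CommMonoid M] {s : Finset ι} {f g : ι → M} {a : ι}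
    {c : M} (ha : a ∈ s) (hfa : f a = g a * c) (hne : ∀ i ∈ s, i ≠ a → f i = g i) :
    ∏ i ∈ s, f i = (∏ i ∈ s, g i) * c := by
  classical
  rw [← mul_prod_erase s f ha, ← mul_prod_erase s g ha, hfa, mul_right_comm,
    prod_congr rfl fun i hi => hne i (mem_of_mem_erase hi) (ne_of_mem_erase hi)]

theorem prod_prod_erase_eq {ι M : Type*} [DecidableEq ι] [CommMonoid M] {s : Finset ι} {a : ι}
    (ha : a ∈ s) (f : ι → ι → M) :
    ∏ i ∈ s, ∏ p ∈ s.erase i, f i p =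
      (∏ i ∈ s.erase a, f a i * f i a) * ∏ i ∈ s.erase a, ∏ p ∈ (s.erase i).erase a, f i p := by
  rw [← mul_prod_erase s _ ha, prod_mul_distrib, mul_assoc]
  congr 1
  rw [← prod_mul_distrib]
  refine prod_congr rfl fun i hi => (mul_prod_erase (s.erase i) _ ?_).symm
  exact mem_erase.2 ⟨(ne_of_mem_erase hi).symm, ha⟩

section GammaShift

variable {ℏ : ℝ} {N r j : ℕ} (hr : r + 1 < N) (hj : j ∈ Icc 1 (r + 1))

include hr hj

theorem gammaFactor_unitArray (hℏ : 0 < ℏ) {γ : GZ} (hγ : ∀ k ∈ Icc 1 r, γ r k ≠ γ (r + 1) j) :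
    gammaFactor ℏ N (unitArray (r + 1) j) γ =
      gammaFactor ℏ N 0 γ * ∏ k ∈ Icc 1 r, scaledDiff ℏ (γ r k) (γ (r + 1) j) := by
  have hoff : ∀ n ∈ Icc 1 (N - 1), n ≠ r →
      ∏ k ∈ Icc 1 n, ∏ m ∈ Icc 1 (n + 1),
          Complex.Gamma (scaledDiff ℏ (γ n k) (γ (n + 1) m) + unitArray (r + 1) j (n + 1) m) =
        ∏ k ∈ Icc 1 n, ∏ m ∈ Icc 1 (n + 1),
          Complex.Gamma (scaledDiff ℏ (γ n k) (γ (n + 1) m) + (0 : GZ) (n + 1) m) := by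
    intro n _ hn
    have hrow (m : ℕ) : unitArray (r + 1) j (n + 1) m = 0 := unitArray_of_row_ne (by lia) _ _
    simp only [hrow, Pi.zero_apply]
  obtain rfl | hr0 := Nat.eq_zero_or_pos r
  · rw [Icc_eq_empty_of_lt one_pos, prod_empty, mul_one]
    exact prod_congr rfl fun n hn => hoff n hn (Nat.one_le_iff_ne_zero.1 (mem_Icc.1 hn).1)
  refine prod_eq_prod_mul_of_mem (mem_Icc.2 ⟨hr0, by lia⟩) ?_ hoff
  rw [← prod_mul_distrib]
  refine prod_congr rfl fun k hk => prod_eq_prod_mul_of_mem hj ?_ fun m _ hm => ?_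
  · rw [unitArray_self, Complex.Gamma_add_one _ (scaledDiff_ne_zero hℏ (hγ k hk)), Pi.zero_apply,
      Pi.zero_apply, add_zero, mul_comm]
  · rw [unitArray_of_col_ne hm, Pi.zero_apply, Pi.zero_apply]

theorem gammaFactor_shift (hℏ : 0 < ℏ) {γ : GZ}
    (hγ : ∀ m ∈ Icc 1 (r + 2), γ (r + 1) j ≠ γ (r + 2) m) :
    gammaFactor ℏ N (unitArray (r + 1) j) (γ + (I * ℏ : ℂ) • unitArray (r + 1) j) =
      gammaFactor ℏ N 0 γ * ∏ m ∈ Icc 1 (r + 2), scaledDiff ℏ (γ (r + 1) j) (γ (r + 2) m) := by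
  simp only [gammaFactor, scaledDiff_add_smul hℏ, sub_add_cancel, Pi.zero_apply, add_zero]
  refine prod_eq_prod_mul_of_mem (a := r + 1) (mem_Icc.2 ⟨by lia, by lia⟩) ?_ fun n _ hn => ?_
  · refine prod_eq_prod_mul_of_mem hj ?_ fun k _ hk => ?_
    · rw [← prod_mul_distrib]
      refine prod_congr rfl fun m hm => ?_
      rw [unitArray_self, Complex.Gamma_add_one _ (scaledDiff_ne_zero hℏ (hγ m hm)), mul_comm]
    · simp only [unitArray_of_col_ne hk, add_zero]
  · simp only [unitArray_of_row_ne hn, add_zero]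

theorem invGammaFactor_zero (γ : GZ) :
    invGammaFactor ℏ N 0 γ = invGammaFactor ℏ N (unitArray (r + 1) j) γ *
      ∏ p ∈ (Icc 1 (r + 1)).erase j, scaledDiff ℏ (γ (r + 1) j) (γ (r + 1) p) := by
  simp only [invGammaFactor, Pi.zero_apply, add_zero]
  refine prod_eq_prod_mul_of_mem (a := r + 1) (mem_Icc.2 ⟨by lia, by lia⟩) ?_ fun n _ hn => ?_
  · refine prod_eq_prod_mul_of_mem hj ?_ fun k _ hk => ?_
    · rw [← prod_mul_distrib]
      refine prod_congr rfl fun p _ => ?_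
      rw [unitArray_self, Complex.one_div_Gamma_eq_self_mul_one_div_Gamma_add_one, mul_comm]
    · simp only [unitArray_of_col_ne hk, add_zero]
  · simp only [unitArray_of_row_ne hn, add_zero]

omit hr in
theorem prod_inv_Gamma_row_shift (hℏ : 0 < ℏ) (γ : GZ) :
    ∏ s ∈ Icc 1 (r + 1), ∏ p ∈ (Icc 1 (r + 1)).erase s,
        (Complex.Gamma (scaledDiff ℏ ((γ + (I * ℏ : ℂ) • unitArray (r + 1) j) (r + 1) s)
          ((γ + (I * ℏ : ℂ) • unitArray (r + 1) j) (r + 1) p) + unitArray (r + 1) j (r + 1) s))⁻¹ =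
      (∏ s ∈ Icc 1 (r + 1), ∏ p ∈ (Icc 1 (r + 1)).erase s,
        (Complex.Gamma (scaledDiff ℏ (γ (r + 1) s) (γ (r + 1) p) +
          unitArray (r + 1) j (r + 1) s))⁻¹) * (-1) ^ r := by
  have hsign : (-1 : ℂ) ^ r = ∏ _s ∈ (Icc 1 (r + 1)).erase j, -1 := by
    rw [prod_const, card_erase_of_mem hj, Nat.card_Icc, Nat.add_sub_cancel, Nat.add_sub_cancel]
  rw [prod_prod_erase_eq hj, prod_prod_erase_eq hj, mul_right_comm, hsign]
  simp only [scaledDiff_add_smul hℏ]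
  congr 1
  · rw [← prod_mul_distrib]
    refine prod_congr rfl fun s hs => ?_
    rw [unitArray_self, unitArray_of_col_ne (ne_of_mem_erase hs), ← neg_scaledDiff ℏ _ (γ _ s)]
    generalize scaledDiff ℏ (γ (r + 1) j) (γ (r + 1) s) = a
    rw [add_zero, add_zero, sub_zero,
      Complex.one_div_Gamma_eq_self_mul_one_div_Gamma_add_one (a + 1),
      Complex.one_div_Gamma_eq_self_mul_one_div_Gamma_add_one (-a - 1), sub_add_cancel]
    ring
  · refine prod_congr rfl fun s hs => prod_congr rfl fun p hp => ?_
    rw [unitArray_of_col_ne (ne_of_mem_erase hs), unitArray_of_col_ne (ne_of_mem_erase hp),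
      add_zero, sub_zero]

theorem invGammaFactor_shift (hℏ : 0 < ℏ) (γ : GZ) :
    invGammaFactor ℏ N (unitArray (r + 1) j) (γ + (I * ℏ : ℂ) • unitArray (r + 1) j) =
      invGammaFactor ℏ N (unitArray (r + 1) j) γ * (-1) ^ r := by
  refine prod_eq_prod_mul_of_mem (a := r + 1) (mem_Icc.2 ⟨by lia, by lia⟩)
    (prod_inv_Gamma_row_shift hj hℏ γ) fun n _ hn => ?_
  simp only [scaledDiff_add_smul hℏ, unitArray_of_row_ne hn, add_zero, sub_zero]

omit hj in
theorem invGammaFactor_unitArray_eq_zero {γ : GZ} (hγ : ¬ Set.InjOn (γ (r + 1)) (Icc 1 (r + 1)))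
    (j : ℕ) : invGammaFactor ℏ N (unitArray (r + 1) j) γ = 0 := by
  obtain ⟨s, hs, p, hp, hsj, hsp⟩ : ∃ s ∈ Icc 1 (r + 1), ∃ p ∈ (Icc 1 (r + 1)).erase s,
      s ≠ j ∧ γ (r + 1) s = γ (r + 1) p := by
    simp only [Set.InjOn, not_forall] at hγ
    obtain ⟨s, hs, p, hp, heq, hne⟩ := hγ
    by_cases hsj : s = j
    · exact ⟨p, hp, s, mem_erase.2 ⟨hne, hs⟩, fun h => hne (hsj.trans h.symm), heq.symm⟩
    · exact ⟨s, hs, p, mem_erase.2 ⟨Ne.symm hne, hp⟩, hsj, heq⟩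
  refine prod_eq_zero (i := r + 1) (mem_Icc.2 ⟨by lia, by lia⟩)
    (prod_eq_zero hs (prod_eq_zero hp ?_))
  rw [unitArray_of_col_ne hsj, add_zero, hsp, scaledDiff, sub_self, zero_div, Complex.Gamma_zero,
    inv_zero]

end GammaShift

section LagrangeSums

variable {ℏ : ℝ} {N r : ℕ}

theorem invGammaFactor_unitArray_of_injOn (hℏ : 0 < ℏ) (hr : r + 1 < N) {γ : GZ}
    (hinj : Set.InjOn (γ (r + 1)) (Icc 1 (r + 1))) {j : ℕ} (hj : j ∈ Icc 1 (r + 1)) :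
    invGammaFactor ℏ N (unitArray (r + 1) j) γ = invGammaFactor ℏ N 0 γ *
      ((I * ℏ) ^ r / ∏ p ∈ (Icc 1 (r + 1)).erase j, (γ (r + 1) j - γ (r + 1) p)) := by
  have hcard : #((Icc 1 (r + 1)).erase j) = r := by rw [card_erase_of_mem hj]; simp
  have hne : ∏ p ∈ (Icc 1 (r + 1)).erase j, (γ (r + 1) j - γ (r + 1) p) ≠ 0 :=
    prod_ne_zero_iff.2 fun p hp => sub_ne_zero.2 <|
      hinj.ne hj (mem_of_mem_erase hp) (ne_of_mem_erase hp).symm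
  have hpow := pow_ne_zero r (I_mul_ofReal_ne_zero hℏ)
  rw [invGammaFactor_zero hr hj, prod_scaledDiff, hcard, mul_assoc, div_mul_div_cancel₀ hpow,
    div_self hne, mul_one]

theorem todaIntegrand_eq_zero_of_not_injOn (hr : r + 1 < N) {γ : GZ}
    (hinj : ¬ Set.InjOn (γ (r + 1)) (Icc 1 (r + 1))) (x : ℕ → ℝ) :
    todaIntegrand ℏ N x γ = 0 := by
  rw [← markedIntegrand_zero, markedIntegrand, invGammaFactor_zero hr (left_mem_Icc.2 (by lia)),
    invGammaFactor_unitArray_eq_zero hr hinj, zero_mul, mul_zero, zero_mul]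

theorem sum_markedIntegrand (hℏ : 0 < ℏ) (hr : r + 1 < N) {γ : GZ}
    (hγ : ∀ k ∈ Icc 1 r, ∀ j ∈ Icc 1 (r + 1), γ r k ≠ γ (r + 1) j) (x : ℕ → ℝ) :
    ∑ j ∈ Icc 1 (r + 1), markedIntegrand ℏ N x (unitArray (r + 1) j) γ =
      (-1) ^ r * todaIntegrand ℏ N x γ := by
  by_cases hinj : Set.InjOn (γ (r + 1)) (Icc 1 (r + 1))
  · have hpow := pow_ne_zero r (I_mul_ofReal_ne_zero hℏ)
    have hterm : ∀ j ∈ Icc 1 (r + 1), markedIntegrand ℏ N x (unitArray (r + 1) j) γ =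
        (-1) ^ r * todaIntegrand ℏ N x γ * ((∏ m ∈ Icc 1 r, (γ (r + 1) j - γ r m)) /
          ∏ p ∈ (Icc 1 (r + 1)).erase j, (γ (r + 1) j - γ (r + 1) p)) := by
      intro j hj
      have hupper : ∏ k ∈ Icc 1 r, scaledDiff ℏ (γ r k) (γ (r + 1) j) =
          (-1) ^ r * ((∏ m ∈ Icc 1 r, (γ (r + 1) j - γ r m)) / (I * ℏ) ^ r) := by
        simp only [← neg_scaledDiff ℏ (γ (r + 1) j), prod_neg, prod_scaledDiff, Nat.card_Icc,
          Nat.add_sub_cancel]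
      rw [← markedIntegrand_zero, markedIntegrand, markedIntegrand,
        gammaFactor_unitArray hr hj hℏ fun k hk => hγ k hk j hj,
        invGammaFactor_unitArray_of_injOn hℏ hr hinj hj, hupper]
      field_simp
    have hlagrange := lagrangeSum_eq_one hinj (T := Icc 1 r) (by simp) (γ r)
    rw [lagrangeSum] at hlagrange
    rw [sum_congr rfl hterm, ← mul_sum, hlagrange, mul_one]
  · rw [todaIntegrand_eq_zero_of_not_injOn hr hinj, mul_zero]
    refine sum_eq_zero fun j _ => ?_
    rw [markedIntegrand, invGammaFactor_unitArray_eq_zero hr hinj, mul_zero, zero_mul]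

theorem markedIntegrand_shift (hℏ : 0 < ℏ) (hr : r + 1 < N) {γ : GZ} {j : ℕ}
    (hj : j ∈ Icc 1 (r + 1)) (hγ : ∀ m ∈ Icc 1 (r + 2), γ (r + 1) j ≠ γ (r + 2) m) (x : ℕ → ℝ) :
    markedIntegrand ℏ N x (unitArray (r + 1) j) (γ + (I * ℏ : ℂ) • unitArray (r + 1) j) =
      (-1) ^ r * Complex.exp (-((x (r + 1) : ℂ) - x (r + 2))) * (ℏ : ℂ) ^ 2 *
        (∏ m ∈ Icc 1 (r + 2), scaledDiff ℏ (γ (r + 1) j) (γ (r + 2) m)) *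
        (hpowFactor ℏ N γ * gammaFactor ℏ N 0 γ * invGammaFactor ℏ N (unitArray (r + 1) j) γ *
          planeWave ℏ N x γ) := by
  rw [markedIntegrand, hpowFactor_shift hr hj hℏ, gammaFactor_shift hr hj hℏ hγ,
    invGammaFactor_shift hr hj hℏ, planeWave_shift hr hj hℏ]
  ring

/-- The function of the array which, under the Mellin–Barnes integral, acts as the potential
`exp (x n - x (n + 1))`. -/
def potentialSymbol (γ : GZ) (n : ℕ) : ℂ :=
  (∑ m ∈ Icc 1 (n + 1), γ (n + 1) m ^ 2 - ∑ j ∈ Icc 1 n, γ n j ^ 2 - momentum γ (n + 1) ^ 2) / 2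

theorem sum_markedIntegrand_shift (hℏ : 0 < ℏ) (hr : r + 1 < N) {γ : GZ}
    (hγ : ∀ j ∈ Icc 1 (r + 1), ∀ m ∈ Icc 1 (r + 2), γ (r + 1) j ≠ γ (r + 2) m) (x : ℕ → ℝ) :
    ∑ j ∈ Icc 1 (r + 1), markedIntegrand ℏ N x (unitArray (r + 1) j)
        (γ + (I * ℏ : ℂ) • unitArray (r + 1) j) =
      (-1) ^ r * Complex.exp (-((x (r + 1) : ℂ) - x (r + 2))) *
        potentialSymbol γ (r + 1) * todaIntegrand ℏ N x γ := by
  by_cases hinj : Set.InjOn (γ (r + 1)) (Icc 1 (r + 1))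
  · have hℏ' : (ℏ : ℂ) ≠ 0 := Complex.ofReal_ne_zero.2 hℏ.ne'
    have hpow := pow_ne_zero r (I_mul_ofReal_ne_zero hℏ)
    have hterm : ∀ j ∈ Icc 1 (r + 1), markedIntegrand ℏ N x (unitArray (r + 1) j)
          (γ + (I * ℏ : ℂ) • unitArray (r + 1) j) =
        -((-1) ^ r * Complex.exp (-((x (r + 1) : ℂ) - x (r + 2))) * todaIntegrand ℏ N x γ) *
          ((∏ m ∈ Icc 1 (r + 2), (γ (r + 1) j - γ (r + 2) m)) /
            ∏ p ∈ (Icc 1 (r + 1)).erase j, (γ (r + 1) j - γ (r + 1) p)) := by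
      intro j hj
      have hpow_succ : (I * ℏ : ℂ) ^ (r + 2) = -(ℏ : ℂ) ^ 2 * (I * ℏ) ^ r := by
        linear_combination (I * ℏ) ^ r * (ℏ : ℂ) ^ 2 * Complex.I_sq
      rw [markedIntegrand_shift hℏ hr hj (hγ j hj), ← markedIntegrand_zero, markedIntegrand,
        invGammaFactor_unitArray_of_injOn hℏ hr hinj hj, prod_scaledDiff, Nat.card_Icc,
        Nat.add_sub_cancel, hpow_succ]
      generalize (I * ℏ : ℂ) ^ r = z at hpow
      field_simp
    have hlagrange := two_mul_lagrangeSum hinj (T := Icc 1 (r + 2)) (by simp) (γ (r + 2))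
    rw [lagrangeSum] at hlagrange
    rw [sum_congr rfl hterm, ← mul_sum, potentialSymbol, momentum, Nat.add_succ_sub_one]
    linear_combination -((-1) ^ r * Complex.exp (-((x (r + 1) : ℂ) - x (r + 2))) *
      todaIntegrand ℏ N x γ) / 2 * hlagrange
  · rw [todaIntegrand_eq_zero_of_not_injOn hr hinj, mul_zero]
    refine sum_eq_zero fun j hj => ?_
    rw [markedIntegrand_shift hℏ hr hj (hγ j hj), invGammaFactor_unitArray_eq_zero hr hinj,
      mul_zero, zero_mul, mul_zero]

end LagrangeSums

/-! ### Polynomial-exponential bounds -/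

section PolyExpBounded

open scoped NNReal

variable {α ι : Type*} {K : α → ℝ≥0}

/-- `f` is bounded by `exp ε` up to a factor growing at most polynomially in the size `K` of the
argument. -/
def PolyExpBounded (K : α → ℝ≥0) (f : α → ℂ) (ε : α → ℝ) : Prop :=
  ∃ C, 0 ≤ C ∧ ∃ p : ℕ, ∀ a, ‖f a‖ ≤ C * (1 + K a) ^ p * Real.exp (ε a)

namespace PolyExpBounded

theorem mul {f g : α → ℂ} {ε ε' : α → ℝ} (hf : PolyExpBounded K f ε)
    (hg : PolyExpBounded K g ε') :
    PolyExpBounded K (fun a => f a * g a) fun a => ε a + ε' a := by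
  obtain ⟨C, hC, p, hf⟩ := hf
  obtain ⟨C', hC', p', hg⟩ := hg
  refine ⟨C * C', mul_nonneg hC hC', p + p', fun a => ?_⟩
  calc ‖f a * g a‖
      ≤ C * (1 + K a) ^ p * Real.exp (ε a) * (C' * (1 + K a) ^ p' * Real.exp (ε' a)) := by
        rw [norm_mul]
        exact mul_le_mul (hf a) (hg a) (norm_nonneg _) (by positivity)
    _ = C * C' * (1 + K a) ^ (p + p') * Real.exp (ε a + ε' a) := by
        rw [Real.exp_add, pow_add]
        ring

theorem prod {s : Finset ι} {f : ι → α → ℂ} {ε : ι → α → ℝ}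
    (h : ∀ i ∈ s, PolyExpBounded K (f i) (ε i)) :
    PolyExpBounded K (fun a => ∏ i ∈ s, f i a) fun a => ∑ i ∈ s, ε i a := by
  classical
  induction s using Finset.induction_on with
  | empty => exact ⟨1, zero_le_one, 0, fun a => by simp⟩
  | insert i s hi ih =>
    simp only [prod_insert hi, sum_insert hi]
    exact (h i (mem_insert_self i s)).mul (ih fun j hj => h j (mem_insert_of_mem hj))

theorem cexp {f : α → ℂ} {M : ℝ} (hM : ∀ a, (f a).re ≤ M) :
    PolyExpBounded K (fun a => Complex.exp (f a)) fun _ => 0 :=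
  ⟨Real.exp M, (Real.exp_pos M).le, 0, fun a => by simpa [Complex.norm_exp] using hM a⟩

theorem comp_of_abs_im_le {s : Set ℂ} {F : ℂ → ℂ} {ε : ℂ → ℝ}
    (hF : ∃ C, 0 ≤ C ∧ ∃ p : ℕ, ∀ w, w ∈ s → ‖F w‖ ≤ C * (1 + |w.im|) ^ p * Real.exp (ε w))
    {w : α → ℂ} (hw : ∀ a, w a ∈ s) {B : ℝ≥0} (hB : ∀ a, |(w a).im| ≤ B * (1 + K a)) :
    PolyExpBounded K (fun a => F (w a)) fun a => ε (w a) := by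
  obtain ⟨C, hC, p, hF⟩ := hF
  refine ⟨C * (1 + B) ^ p, by positivity, p, fun a => (hF _ (hw a)).trans ?_⟩
  have hle : 1 + |(w a).im| ≤ (1 + B) * (1 + K a) := by nlinarith [hB a, (K a).coe_nonneg]
  calc C * (1 + |(w a).im|) ^ p * Real.exp (ε (w a))
      ≤ C * ((1 + B) * (1 + K a)) ^ p * Real.exp (ε (w a)) := by gcongr
    _ = C * (1 + B) ^ p * (1 + K a) ^ p * Real.exp (ε (w a)) := by rw [mul_pow]; ring

end PolyExpBounded

theorem one_add_pow_mul_exp_neg_mul_le (q : ℕ) {c t : ℝ} (hc : 0 < c) (ht : 0 ≤ t) :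
    (1 + t) ^ q * Real.exp (-(c * t)) ≤ q.factorial / c ^ q * Real.exp c := by
  have hexp : (c * (1 + t)) ^ q / q.factorial ≤ Real.exp c * Real.exp (c * t) := by
    rw [← Real.exp_add, ← mul_one_add]
    exact Real.pow_div_factorial_le_exp _ (by positivity) q
  rw [Real.exp_neg, ← div_eq_mul_inv, div_le_iff₀ (Real.exp_pos _), mul_assoc, div_mul_eq_mul_div,
    le_div_iff₀ (by positivity), mul_comm, ← mul_pow]
  rwa [div_le_iff₀ (by positivity), mul_comm _ (q.factorial : ℝ)] at hexp

theorem PolyExpBounded.exists_norm_mul_one_add_pow_le {f : α → ℂ} {ε : α → ℝ}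
    (hf : PolyExpBounded K f ε) {A c : ℝ} (hc : 0 < c) (hε : ∀ a, ε a ≤ A - c * K a) (k : ℕ) :
    ∃ C, ∀ a, ‖f a‖ * (1 + K a) ^ k ≤ C := by
  obtain ⟨C, hC, p, hf⟩ := hf
  refine ⟨C * Real.exp A * ((p + k).factorial / c ^ (p + k) * Real.exp c), fun a => ?_⟩
  calc ‖f a‖ * (1 + K a) ^ k
      ≤ C * (1 + K a) ^ p * Real.exp (A - c * K a) * (1 + K a) ^ k := by
        gcongr
        exact (hf a).trans (by gcongr; exact hε a)
    _ = C * Real.exp A * ((1 + K a) ^ (p + k) * Real.exp (-(c * K a))) := by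
        rw [sub_eq_add_neg, Real.exp_add, pow_add]
        ring
    _ ≤ _ := mul_le_mul_of_nonneg_left
        (one_add_pow_mul_exp_neg_mul_le _ hc (K a).coe_nonneg) (by positivity)

end PolyExpBounded

section Bounds

open scoped NNReal

theorem scaledDiff_eq (ℏ : ℝ) (u v : ℂ) : scaledDiff ℏ u v = -I * (u - v) / ℏ := by
  rw [scaledDiff, div_mul_eq_div_div, Complex.div_I, neg_mul, mul_comm, neg_div]

theorem re_scaledDiff (ℏ : ℝ) (u v : ℂ) : (scaledDiff ℏ u v).re = (u.im - v.im) / ℏ := by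
  simp [scaledDiff_eq, Complex.div_ofReal_re]

theorem im_scaledDiff (ℏ : ℝ) (u v : ℂ) : (scaledDiff ℏ u v).im = -(u.re - v.re) / ℏ := by
  simp [scaledDiff_eq, Complex.div_ofReal_im]

/-- An array all of whose entries are `0` or `1`, recording which Gamma arguments are raised. -/
def IsMarking (e : GZ) : Prop := ∀ n j, e n j = 0 ∨ e n j = 1

theorem isMarking_zero : IsMarking 0 := fun _ _ => .inl rfl

theorem isMarking_unitArray (n₀ j₀ : ℕ) : IsMarking (unitArray n₀ j₀) := fun n j => by
  unfold unitArray
  split_ifs <;> simp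

namespace IsMarking

variable {e : GZ} (he : IsMarking e) (n j : ℕ)

include he

theorem im_eq_zero : (e n j).im = 0 := by rcases he n j with h | h <;> simp [h]

theorem re_mem_Icc : (e n j).re ∈ Set.Icc 0 1 := by rcases he n j with h | h <;> simp [h]

end IsMarking

/-- The arguments of the Gamma factors of the integrand marked by `e` have real part at least
`δ`. -/
def IsSeparated (ℏ : ℝ) (N : ℕ) (e : GZ) (δ : ℝ) (γ : GZ) : Prop :=
  ∀ n ∈ Icc 1 (N - 1), ∀ k ∈ Icc 1 n, ∀ m ∈ Icc 1 (n + 1),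
    δ ≤ (scaledDiff ℏ (γ n k) (γ (n + 1) m) + e (n + 1) m).re

variable {α : Type*}

/-- A family of arrays with uniformly bounded imaginary parts, whose real parts grow at most
linearly in the size `K` of the parameter. -/
structure InTube (N : ℕ) (K : α → ℝ≥0) (B : ℝ≥0) (γ : α → GZ) : Prop where
  abs_re_le : ∀ a, ∀ n ≤ N, ∀ j ∈ Icc 1 n, |(γ a n j).re| ≤ B * (1 + K a)
  abs_im_le : ∀ a, ∀ n ≤ N, ∀ j ∈ Icc 1 n, |(γ a n j).im| ≤ B

namespace InTube

variable {ℏ : ℝ} {N : ℕ} {K : α → ℝ≥0} {B : ℝ≥0} {γ : α → GZ} (hγ : InTube N K B γ)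

include hγ

theorem abs_im_sum_le (a : α) {n : ℕ} (hn : n ≤ N) : |(∑ j ∈ Icc 1 n, γ a n j).im| ≤ N * B := by
  rw [Complex.im_sum]
  calc |∑ j ∈ Icc 1 n, (γ a n j).im| ≤ ∑ _j ∈ Icc 1 n, (B : ℝ) :=
        (abs_sum_le_sum_abs _ _).trans (sum_le_sum fun j hj => hγ.abs_im_le a n hn j hj)
    _ = n * B := by simp
    _ ≤ N * B := by gcongr

theorem norm_sum_le (a : α) {n : ℕ} (hn : n ≤ N) :
    ‖∑ j ∈ Icc 1 n, γ a n j‖ ≤ N * (2 * B * (1 + K a)) := by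
  have hentry : ∀ j ∈ Icc 1 n, ‖γ a n j‖ ≤ 2 * B * (1 + K a) := fun j hj =>
    calc ‖γ a n j‖ ≤ B * (1 + K a) + B := (Complex.norm_le_abs_re_add_abs_im _).trans
          (add_le_add (hγ.abs_re_le a n hn j hj) (hγ.abs_im_le a n hn j hj))
      _ ≤ 2 * B * (1 + K a) := by nlinarith [mul_nonneg B.coe_nonneg (K a).coe_nonneg]
  calc ‖∑ j ∈ Icc 1 n, γ a n j‖ ≤ ∑ _j ∈ Icc 1 n, 2 * B * (1 + K a : ℝ) :=
        (_root_.norm_sum_le _ _).trans (sum_le_sum hentry)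
    _ = n * (2 * B * (1 + K a)) := by simp
    _ ≤ N * (2 * B * (1 + K a)) := by gcongr

theorem abs_im_momentum_le (a : α) {n : ℕ} (hn : n ≤ N) :
    |(momentum (γ a) n).im| ≤ 2 * N * B := by
  rw [momentum, Complex.sub_im]
  refine (abs_sub _ _).trans ?_
  linarith [hγ.abs_im_sum_le a hn, hγ.abs_im_sum_le a ((n.sub_le 1).trans hn)]

theorem norm_momentum_le (a : α) {n : ℕ} (hn : n ≤ N) :
    ‖momentum (γ a) n‖ ≤ 4 * N * B * (1 + K a) := by
  refine (norm_sub_le _ _).trans ?_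
  linarith [hγ.norm_sum_le a hn, hγ.norm_sum_le a ((n.sub_le 1).trans hn)]

theorem abs_re_scaledDiff_le (hℏ : 0 < ℏ) (a : α) {n j n' j' : ℕ} (hn : n ≤ N)
    (hj : j ∈ Icc 1 n) (hn' : n' ≤ N) (hj' : j' ∈ Icc 1 n') :
    |(scaledDiff ℏ (γ a n j) (γ a n' j')).re| ≤ 2 * B / ℏ := by
  rw [re_scaledDiff, abs_div, abs_of_pos hℏ]
  gcongr
  refine (abs_sub _ _).trans ?_
  linarith [hγ.abs_im_le a n hn j hj, hγ.abs_im_le a n' hn' j' hj']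

theorem abs_im_scaledDiff_le (hℏ : 0 < ℏ) (a : α) {n j n' j' : ℕ} (hn : n ≤ N)
    (hj : j ∈ Icc 1 n) (hn' : n' ≤ N) (hj' : j' ∈ Icc 1 n') :
    |(scaledDiff ℏ (γ a n j) (γ a n' j')).im| ≤ 2 * B / ℏ * (1 + K a) := by
  rw [im_scaledDiff, abs_div, abs_neg, abs_of_pos hℏ, div_mul_eq_mul_div]
  gcongr
  refine (abs_sub _ _).trans ?_
  linarith [hγ.abs_re_le a n hn j hj, hγ.abs_re_le a n' hn' j' hj']

theorem polyExpBounded_hpowFactor (hℏ : 0 < ℏ) :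
    PolyExpBounded K (fun a => hpowFactor ℏ N (γ a)) fun _ => 0 := by
  have h : PolyExpBounded K (fun a => hpowFactor ℏ N (γ a)) fun _ =>
      ∑ n ∈ Icc 1 (N - 1), ∑ _k ∈ Icc 1 n, ∑ _m ∈ Icc 1 (n + 1), 0 := by
    refine .prod fun n hn => .prod fun k hk => .prod fun m hm => ?_
    rw [mem_Icc] at hn
    refine .cexp (M := 2 * B / ℏ * |Real.log ℏ|) fun a => ?_
    rw [Complex.re_mul_ofReal]
    refine (le_abs_self _).trans ?_
    rw [abs_mul]
    gcongr
    exact hγ.abs_re_scaledDiff_le hℏ a (by lia) hk (by lia) hm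
  simpa only [sum_const_zero] using h

theorem polyExpBounded_planeWave (hℏ : 0 < ℏ) (x : ℕ → ℝ) :
    PolyExpBounded K (fun a => planeWave ℏ N x (γ a)) fun _ => 0 := by
  refine .cexp (M := (∑ n ∈ Icc 1 N, 2 * N * B * |x n|) / ℏ) fun a => ?_
  rw [div_mul_eq_mul_div, Complex.div_ofReal_re, Complex.I_mul_re, Complex.im_sum,
    ← sum_neg_distrib]
  gcongr with n hn
  rw [Complex.im_mul_ofReal]
  refine (neg_le_abs _).trans ?_
  rw [abs_mul]
  gcongr
  exact hγ.abs_im_momentum_le a (mem_Icc.1 hn).2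

variable {e : GZ} (he : IsMarking e) (hℏ : 0 < ℏ)

include he hℏ

theorem polyExpBounded_gammaFactor {δ : ℝ} (hδ : 0 < δ)
    (hsep : ∀ a, IsSeparated ℏ N e δ (γ a)) :
    PolyExpBounded K (fun a => gammaFactor ℏ N e (γ a)) fun a => -(π / (2 * ℏ) *
      ∑ n ∈ Icc 1 (N - 1), ∑ k ∈ Icc 1 n, ∑ m ∈ Icc 1 (n + 1),
        |(γ a n k).re - (γ a (n + 1) m).re|) := by
  simp only [mul_sum, ← sum_neg_distrib]
  refine .prod fun n hn => .prod fun k hk => .prod fun m hm => ?_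
  obtain ⟨hn1, hnN⟩ := mem_Icc.1 hn
  have hrate (a : α) : -(π / (2 * ℏ) * |(γ a n k).re - (γ a (n + 1) m).re|) =
      -(π / 2 * |(scaledDiff ℏ (γ a n k) (γ a (n + 1) m) + e (n + 1) m).im|) := by
    rw [Complex.add_im, he.im_eq_zero, add_zero, im_scaledDiff, abs_div, abs_neg, abs_of_pos hℏ]
    field_simp
  simp only [hrate]
  refine .comp_of_abs_im_le (B := 2 * B / ⟨ℏ, hℏ.le⟩)
    (exists_norm_Gamma_le_of_re_mem_Icc hδ (2 * B / ℏ + 1))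
    (fun a => ⟨hsep a n hn k hk m hm, ?_⟩) fun a => ?_
  · rw [Complex.add_re]
    exact add_le_add ((le_abs_self _).trans
      (hγ.abs_re_scaledDiff_le hℏ a (by lia) hk (by lia) hm)) (he.re_mem_Icc _ _).2
  · rw [Complex.add_im, he.im_eq_zero, add_zero]
    exact hγ.abs_im_scaledDiff_le hℏ a (by lia) hk (by lia) hm

theorem polyExpBounded_invGammaFactor :
    PolyExpBounded K (fun a => invGammaFactor ℏ N e (γ a)) fun a => π / (2 * ℏ) *
      ∑ n ∈ Icc 1 (N - 1), ∑ s ∈ Icc 1 n, ∑ p ∈ (Icc 1 n).erase s,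
        |(γ a n s).re - (γ a n p).re| := by
  simp only [mul_sum]
  refine .prod fun n hn => .prod fun s hs => .prod fun p hp => ?_
  obtain ⟨hn1, hnN⟩ := mem_Icc.1 hn
  have hp' := mem_of_mem_erase hp
  have hrate (a : α) : π / (2 * ℏ) * |(γ a n s).re - (γ a n p).re| =
      π / 2 * |(scaledDiff ℏ (γ a n s) (γ a n p) + e n s).im| := by
    rw [Complex.add_im, he.im_eq_zero, add_zero, im_scaledDiff, abs_div, abs_neg, abs_of_pos hℏ]
    field_simp
  simp only [hrate]
  refine .comp_of_abs_im_le (B := 2 * B / ⟨ℏ, hℏ.le⟩)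
    (exists_norm_inv_Gamma_le_of_abs_re_le (2 * B / ℏ + 1)) (fun a => ?_) fun a => ?_
  · obtain ⟨he0, he1⟩ := he.re_mem_Icc n s
    refine (abs_add_le _ _).trans (add_le_add
      (hγ.abs_re_scaledDiff_le hℏ a (by lia) hs (by lia) hp') ?_)
    rwa [abs_of_nonneg he0]
  · rw [Complex.add_im, he.im_eq_zero, add_zero]
    exact hγ.abs_im_scaledDiff_le hℏ a (by lia) hs (by lia) hp'

theorem polyExpBounded_markedIntegrand {δ : ℝ} (hδ : 0 < δ)
    (hsep : ∀ a, IsSeparated ℏ N e δ (γ a)) (x : ℕ → ℝ) :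
    PolyExpBounded K (fun a => markedIntegrand ℏ N x e (γ a)) fun a =>
      -(π / (2 * ℏ) * patternEnergy (fun n j => (γ a n j).re) N) := by
  convert (((hγ.polyExpBounded_hpowFactor hℏ).mul
    (hγ.polyExpBounded_gammaFactor he hℏ hδ hsep)).mul
    (hγ.polyExpBounded_invGammaFactor he hℏ)).mul (hγ.polyExpBounded_planeWave hℏ x) using 2
  · rfl
  · rw [patternEnergy, sum_sub_distrib]
    ring

end InTube

end Bounds

section Regularity

theorem differentiableAt_Gamma_of_re_pos {w : ℂ} (hw : 0 < w.re) :
    DifferentiableAt ℂ Complex.Gamma w := by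
  refine Complex.differentiableAt_Gamma w fun m hm => hw.not_ge ?_
  simp [hm]

theorem continuous_momentum {X : Type*} [TopologicalSpace X] {γ : X → GZ}
    (hγ : ∀ n j, Continuous fun a => γ a n j) (n : ℕ) : Continuous fun a => momentum (γ a) n := by
  unfold momentum
  fun_prop

variable {ℏ δ : ℝ} {N : ℕ} {e : GZ}

theorem continuous_markedIntegrand {X : Type*} [TopologicalSpace X] {γ : X → GZ}
    (hγ : ∀ n j, Continuous fun a => γ a n j) (hδ : 0 < δ)
    (hsep : ∀ a, IsSeparated ℏ N e δ (γ a)) (x : ℕ → ℝ) :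
    Continuous fun a => markedIntegrand ℏ N x e (γ a) := by
  have hdiff (n k n' m : ℕ) : Continuous fun a => scaledDiff ℏ (γ a n k) (γ a n' m) :=
    ((hγ n k).sub (hγ n' m)).div_const _
  refine ((Continuous.mul ?_ ?_).mul ?_).mul ?_
  · exact continuous_finsetProd _ fun n _ => continuous_finsetProd _ fun k _ =>
      continuous_finsetProd _ fun m _ => ((hdiff n k (n + 1) m).mul continuous_const).cexp
  · refine continuous_finsetProd _ fun n hn => continuous_finsetProd _ fun k hk =>
      continuous_finsetProd _ fun m hm => continuous_iff_continuousAt.2 fun a => ?_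
    have hre := hδ.trans_le (hsep a n hn k hk m hm)
    exact (differentiableAt_Gamma_of_re_pos hre).continuousAt.comp
      (f := fun a => scaledDiff ℏ (γ a n k) (γ a (n + 1) m) + e (n + 1) m)
      ((hdiff n k (n + 1) m).add continuous_const).continuousAt
  · exact continuous_finsetProd _ fun n _ => continuous_finsetProd _ fun s _ =>
      continuous_finsetProd _ fun p _ => Complex.differentiable_one_div_Gamma.continuous.comp
        ((hdiff n s n p).add continuous_const)
  · have := continuous_momentum hγ
    unfold planeWave
    fun_prop

theorem differentiableAt_markedIntegrand {γ : ℂ → GZ} {z : ℂ}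
    (hγ : ∀ n j, DifferentiableAt ℂ (fun a => γ a n j) z) (hδ : 0 < δ)
    (hsep : IsSeparated ℏ N e δ (γ z)) (x : ℕ → ℝ) :
    DifferentiableAt ℂ (fun a => markedIntegrand ℏ N x e (γ a)) z := by
  have hdiff (n k n' m : ℕ) :
      DifferentiableAt ℂ (fun a => scaledDiff ℏ (γ a n k) (γ a n' m)) z :=
    ((hγ n k).sub (hγ n' m)).div_const _
  refine ((DifferentiableAt.mul ?_ ?_).mul ?_).mul ?_
  · exact .fun_finsetProd fun n _ => .fun_finsetProd fun k _ => .fun_finsetProd fun m _ =>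
      ((hdiff n k (n + 1) m).mul_const _).cexp
  · refine .fun_finsetProd fun n hn => .fun_finsetProd fun k hk => .fun_finsetProd fun m hm => ?_
    have hre := hδ.trans_le (hsep n hn k hk m hm)
    exact (differentiableAt_Gamma_of_re_pos hre).comp
      (f := fun a => scaledDiff ℏ (γ a n k) (γ a (n + 1) m) + e (n + 1) m) z
      ((hdiff n k (n + 1) m).add_const _)
  · exact .fun_finsetProd fun n _ => .fun_finsetProd fun s _ => .fun_finsetProd fun p _ =>
      (Complex.differentiable_one_div_Gamma _).comp
        (f := fun a => scaledDiff ℏ (γ a n s) (γ a n p) + e n s) z ((hdiff n s n p).add_const _)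
  · unfold planeWave momentum
    fun_prop

end Regularity

/-! ### The integrand on the tube -/

section Tube

open scoped NNReal

variable {N : ℕ} {g : ℕ → ℂ} {η : ℕ → ℕ → ℝ}

theorem continuous_gzTube_apply (N : ℕ) (g : ℕ → ℂ) (η : ℕ → ℕ → ℝ) (n j : ℕ) :
    Continuous fun ξ => gzTube N g η ξ n j := by
  unfold gzTube
  split_ifs <;> fun_prop

theorem gzTube_top (N : ℕ) (g : ℕ → ℂ) (η : ℕ → ℕ → ℝ) (ξ : GZIdx N → ℝ) (j : ℕ) :
    gzTube N g η ξ N j = g j := by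
  simp [gzTube]

theorem re_gzTube (g : ℕ → ℂ) (η : ℕ → ℕ → ℝ) (ξ : GZIdx N → ℝ) (i : GZIdx N) :
    (gzTube N g η ξ i.1.1 i.1.2).re = ξ i := by
  simp [gzTube, i.2]

theorem gzTube_add_single (N : ℕ) (g : ℕ → ℂ) (η : ℕ → ℕ → ℝ) (ξ : GZIdx N → ℝ) (i : GZIdx N)
    (t : ℝ) : gzTube N g η (ξ + Pi.single i t) =
      gzTube N g η ξ + (t : ℂ) • unitArray i.1.1 i.1.2 := by
  obtain ⟨⟨⟨n₀, hn₀⟩, ⟨j₀, hj₀⟩⟩, hi⟩ := i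
  funext n j
  simp only [Pi.add_apply, Pi.smul_apply, smul_eq_mul, gzTube, unitArray]
  by_cases h : 1 ≤ j ∧ j ≤ n ∧ n < N
  · simp only [h, and_self, dif_pos, Pi.single_apply, Subtype.mk.injEq, Prod.mk.injEq,
      Fin.mk.injEq]
    split_ifs
    · push_cast
      ring
    · simp
  · have hne : ¬(n = n₀ ∧ j = j₀) := by
      rintro ⟨rfl, rfl⟩
      exact h ⟨hi.1, hi.2, hn₀⟩
    simp [h, hne]

/-- Heights `η` of integration contours for which every contour of row `n` lies above all
contours of row `n + 1`, the top row being at the heights of the spectral parameters `g`. -/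
structure IsAdmissible (N : ℕ) (g : ℕ → ℂ) (η : ℕ → ℕ → ℝ) : Prop where
  top : ∀ k, η N k = (g k).im
  lt : ∀ n, 1 ≤ n → n ≤ N - 1 → ∀ j ∈ Icc 1 n, ∀ m ∈ Icc 1 (n + 1), η (n + 1) m < η n j

theorem InTube.add_smul {α : Type*} {K : α → ℝ≥0} {B h : ℝ≥0} {γ : α → GZ}
    (hγ : InTube N K B γ) {e : GZ} (he : IsMarking e) :
    InTube N (fun a : α × Set.Icc (0 : ℝ) h => K a.1) (B + h)
      fun a => γ a.1 + ((a.2 : ℝ) * I : ℂ) • e where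
  abs_re_le a n hn j hj := by
    have hre : ((γ a.1 + ((a.2 : ℝ) * I : ℂ) • e) n j).re = (γ a.1 n j).re := by
      simp [he.im_eq_zero n j]
    rw [hre]
    refine (hγ.abs_re_le a.1 n hn j hj).trans ?_
    gcongr
    exact le_self_add
  abs_im_le a n hn j hj := by
    have him : ((γ a.1 + ((a.2 : ℝ) * I : ℂ) • e) n j).im =
        (γ a.1 n j).im + (a.2 : ℝ) * (e n j).re := by simp
    obtain ⟨he0, he1⟩ := he.re_mem_Icc n j
    rw [him, NNReal.coe_add]
    refine (abs_add_le _ _).trans (add_le_add (hγ.abs_im_le a.1 n hn j hj) ?_)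
    rw [abs_of_nonneg (mul_nonneg a.2.2.1 he0)]
    exact (mul_le_of_le_one_right a.2.2.1 he1).trans a.2.2.2

theorem two_mul_norm_sub_le_patternEnergy_gzTube {B : ℝ≥0} (hB : ∀ m ∈ Icc 1 N, |(g m).re| ≤ B)
    (ξ : GZIdx N → ℝ) :
    2 * (‖ξ‖ - B) ≤ patternEnergy (fun n j => (gzTube N g η ξ n j).re) N := by
  set E := patternEnergy (fun n j => (gzTube N g η ξ n j).re) N
  have hE : 0 ≤ E := patternEnergy_nonneg _ N
  have hcoord (i : GZIdx N) : 2 * (|ξ i| - B) ≤ E := by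
    rw [← re_gzTube g η ξ i]
    refine two_mul_abs_sub_le_patternEnergy (N := N)
      (r := fun n j => (gzTube N g η ξ n j).re) (fun m hm => ?_) (by lia) (mem_Icc.2 i.2)
    rw [gzTube_top]
    exact hB m hm
  have hnorm : ‖ξ‖ ≤ B + E / 2 := (pi_norm_le_iff_of_nonneg (by positivity)).2 fun i => by
    rw [Real.norm_eq_abs]
    linarith [hcoord i]
  linarith

namespace IsAdmissible

variable (h : IsAdmissible N g η)

include h

theorem im_gzTube (ξ : GZIdx N → ℝ) {n j : ℕ} (hn : n ≤ N) (hj : j ∈ Icc 1 n) :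
    (gzTube N g η ξ n j).im = η n j := by
  rw [mem_Icc] at hj
  unfold gzTube
  split_ifs with hlt
  · simp
  · obtain rfl : n = N := by lia
    exact (h.top j).symm

theorem exists_inTube : ∃ B : ℝ≥0, (∀ m ∈ Icc 1 N, |(g m).re| ≤ B) ∧
    InTube N (fun ξ => ‖ξ‖₊) B (gzTube N g η) := by
  have hexists : ∀ᶠ B : ℝ≥0 in Filter.atTop, 1 ≤ B ∧ (∀ m ∈ Icc 1 N, |(g m).re| ≤ B) ∧
      ∀ n ∈ range (N + 1), ∀ j ∈ Icc 1 n, |η n j| ≤ B := by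
    simp only [Filter.eventually_and, Filter.eventually_all_finset]
    have habs (t : ℝ) : ∀ᶠ B : ℝ≥0 in Filter.atTop, |t| ≤ B :=
      Filter.eventually_ge_atTop (⟨|t|, abs_nonneg t⟩ : ℝ≥0)
    exact ⟨Filter.eventually_ge_atTop 1, fun m _ => habs _, fun n _ j _ => habs _⟩
  obtain ⟨B, hB1, hg, hη⟩ := hexists.exists
  refine ⟨B, hg, fun ξ n hn j hj => ?_, fun ξ n hn j hj => ?_⟩
  · rw [coe_nnnorm]
    unfold gzTube
    split_ifs with hlt
    · have hcoord := norm_le_pi_norm ξ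
        ⟨(⟨n, hlt.2.2⟩, ⟨j, hlt.2.1.trans_lt hlt.2.2⟩), hlt.1, hlt.2.1⟩
      rw [Real.norm_eq_abs] at hcoord
      have hone : (1 : ℝ) ≤ B := hB1
      simpa using hcoord.trans (by nlinarith [norm_nonneg ξ, hone])
    · exact (hg j (mem_Icc.2 (by rw [mem_Icc] at hj; lia))).trans
        (le_mul_of_one_le_right B.coe_nonneg (by linarith [norm_nonneg ξ]))
  · rw [h.im_gzTube ξ hn hj]
    exact hη n (mem_range.2 (by lia)) j hj

theorem gzTube_ne (ξ : GZIdx N → ℝ) {n k m : ℕ} (hn : n + 1 ≤ N) (hk : k ∈ Icc 1 n)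
    (hm : m ∈ Icc 1 (n + 1)) : gzTube N g η ξ n k ≠ gzTube N g η ξ (n + 1) m := by
  have hlt := h.lt n (by rw [mem_Icc] at hk; lia) (by lia) k hk m hm
  rw [← h.im_gzTube ξ (by lia) hk, ← h.im_gzTube ξ hn hm] at hlt
  exact fun heq => hlt.ne' (congrArg Complex.im heq)

variable {ℏ : ℝ} (hℏ : 0 < ℏ)

include hℏ

theorem exists_isSeparated : ∃ δ > 0, ∀ (ξ : GZIdx N → ℝ) (e : GZ), IsMarking e →
    ∀ ζ : ℂ, ζ.im ∈ Set.Icc 0 ℏ → IsSeparated ℏ N e δ (gzTube N g η ξ + ζ • e) := by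
  have hexists : ∀ᶠ δ in nhdsWithin (0 : ℝ) (Set.Ioi 0), ∀ n ∈ Icc 1 (N - 1), ∀ k ∈ Icc 1 n,
      ∀ m ∈ Icc 1 (n + 1), δ ≤ (η n k - η (n + 1) m) / ℏ := by
    simp only [Filter.eventually_all_finset]
    intro n hn k hk m hm
    rw [mem_Icc] at hn
    have hgap := div_pos (sub_pos.2 (h.lt n hn.1 hn.2 k hk m hm)) hℏ
    exact Filter.mem_of_superset (Ioc_mem_nhdsGT hgap) fun δ hδ => hδ.2
  obtain ⟨δ, hgap, hδ⟩ := (hexists.and self_mem_nhdsWithin).exists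
  refine ⟨δ, hδ, fun ξ e he ζ hζ n hn k hk m hm => (hgap n hn k hk m hm).trans ?_⟩
  rw [mem_Icc] at hn
  have he_nonneg := (he.re_mem_Icc n k).1
  have he'_nonneg := (he.re_mem_Icc (n + 1) m).1
  simp only [Complex.add_re, re_scaledDiff, Pi.add_apply, Pi.smul_apply, smul_eq_mul,
    Complex.add_im, Complex.mul_im, he.im_eq_zero, h.im_gzTube ξ (by lia : n ≤ N) hk,
    h.im_gzTube ξ (by lia : n + 1 ≤ N) hm]
  rw [div_add' _ _ _ hℏ.ne']
  gcongr
  nlinarith [mul_nonneg hζ.1 he_nonneg, mul_nonneg (sub_nonneg.2 hζ.2) he'_nonneg]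

variable {e : GZ} (he : IsMarking e) (x : ℕ → ℝ)

include he

theorem exists_norm_markedIntegrand_mul_le (k : ℕ) : ∃ C, ∀ ξ : GZIdx N → ℝ, ∀ s ∈ Set.Icc 0 ℏ,
    ‖markedIntegrand ℏ N x e (gzTube N g η ξ + (s * I : ℂ) • e)‖ * (1 + ‖ξ‖) ^ k ≤ C := by
  obtain ⟨δ, hδ, hsep⟩ := h.exists_isSeparated hℏ
  obtain ⟨B, hB, htube⟩ := h.exists_inTube
  have hbound := (htube.add_smul (h := ⟨ℏ, hℏ.le⟩) he).polyExpBounded_markedIntegrand he hℏ hδ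
    (fun a => hsep a.1 e he _ (by simpa using ⟨a.2.2.1, (a.2.2.2 : (a.2 : ℝ) ≤ ℏ)⟩)) x
  have hrate (a : (GZIdx N → ℝ) × Set.Icc 0 ℏ) : -(π / (2 * ℏ) * patternEnergy
      (fun n j => ((gzTube N g η a.1 + ((a.2 : ℝ) * I : ℂ) • e) n j).re) N) ≤
      π / ℏ * B - π / ℏ * ‖a.1‖₊ := by
    have hre (n j : ℕ) : ((gzTube N g η a.1 + ((a.2 : ℝ) * I : ℂ) • e) n j).re =
        (gzTube N g η a.1 n j).re := by
      simp [he.im_eq_zero n j]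
    simp only [hre]
    calc -(π / (2 * ℏ) * patternEnergy (fun n j => (gzTube N g η a.1 n j).re) N)
        ≤ -(π / (2 * ℏ) * (2 * (‖a.1‖ - B))) := by
          gcongr
          exact two_mul_norm_sub_le_patternEnergy_gzTube hB a.1
      _ = π / ℏ * B - π / ℏ * ‖a.1‖₊ := by
          rw [coe_nnnorm]
          field_simp
          ring
  obtain ⟨C, hC⟩ := hbound.exists_norm_mul_one_add_pow_le (by positivity) hrate k
  exact ⟨C, fun ξ s hs => by simpa using hC (ξ, ⟨s, hs⟩)⟩

theorem continuous_markedIntegrand_gzTube {ζ : ℂ} (hζ : ζ.im ∈ Set.Icc 0 ℏ) :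
    Continuous fun ξ => markedIntegrand ℏ N x e (gzTube N g η ξ + ζ • e) := by
  obtain ⟨δ, hδ, hsep⟩ := h.exists_isSeparated hℏ
  exact continuous_markedIntegrand
    (fun n j => (continuous_gzTube_apply N g η n j).add continuous_const) hδ
    (fun ξ => hsep ξ e he ζ hζ) x

theorem rapidlyDecaying_markedIntegrand {s : ℝ} (hs : s ∈ Set.Icc 0 ℏ) :
    RapidlyDecaying fun ξ => markedIntegrand ℏ N x e (gzTube N g η ξ + (s * I : ℂ) • e) :=
  ⟨h.continuous_markedIntegrand_gzTube hℏ he x (by simpa using hs), fun k =>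
    let ⟨C, hC⟩ := h.exists_norm_markedIntegrand_mul_le hℏ he x k
    ⟨C, fun ξ => hC ξ s hs⟩⟩

omit he

theorem rapidlyDecaying_todaIntegrand :
    RapidlyDecaying fun ξ => todaIntegrand ℏ N x (gzTube N g η ξ) := by
  simpa [markedIntegrand_zero] using
    h.rapidlyDecaying_markedIntegrand hℏ isMarking_zero x (Set.left_mem_Icc.2 hℏ.le)

theorem integral_markedIntegrand_unitArray {n j : ℕ} (hn : n < N) (hj : j ∈ Icc 1 n) :
    ∫ ξ, markedIntegrand ℏ N x (unitArray n j) (gzTube N g η ξ) =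
      ∫ ξ, markedIntegrand ℏ N x (unitArray n j)
        (gzTube N g η ξ + (I * ℏ : ℂ) • unitArray n j) := by
  obtain ⟨δ, hδ, hsep⟩ := h.exists_isSeparated hℏ
  have he := isMarking_unitArray n j
  rw [mem_Icc] at hj
  have hdiff (ξ : GZIdx N → ℝ) : DifferentiableOn ℂ
      (fun ζ => markedIntegrand ℏ N x (unitArray n j) (gzTube N g η ξ + ζ • unitArray n j))
      {z : ℂ | z.im ∈ Set.Icc 0 ℏ} := fun ζ hζ => by
    refine (differentiableAt_markedIntegrand (fun n' j' => ?_) hδ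
      (hsep ξ _ he ζ hζ) x).differentiableWithinAt
    simp only [Pi.add_apply, Pi.smul_apply, smul_eq_mul]
    fun_prop
  have hshift := integral_pi_eq_integral_pi_mul_I (ι := GZIdx N)
    ⟨(⟨n, hn⟩, ⟨j, hj.2.trans_lt hn⟩), hj⟩
    (U := fun ξ ζ => markedIntegrand ℏ N x (unitArray n j) (gzTube N g η ξ + ζ • unitArray n j))
    hℏ.le (fun ξ t ζ => by rw [gzTube_add_single, add_assoc, ← add_smul, add_comm (t : ℂ)]) hdiff
    (fun s hs => h.continuous_markedIntegrand_gzTube hℏ he x (by simpa using hs))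
    (h.exists_norm_markedIntegrand_mul_le hℏ he x)
  simpa only [zero_smul, add_zero, mul_comm (ℏ : ℂ) I] using hshift

end IsAdmissible

end Tube

/-! ### Symmetric functions of the momenta -/

section MomentumAlgebra

theorem sum_univ_fin_add_one {M : Type*} [AddCommMonoid M] (N : ℕ) (f : ℕ → M) :
    ∑ i : Fin N, f (i + 1) = ∑ n ∈ Icc 1 N, f n := by
  induction N with
  | zero => simp
  | succ N ih => rw [Fin.sum_univ_castSucc, sum_Icc_succ_top (by lia), ← ih]; simp

theorem two_mul_sum_sum_Ioi_mul {R : Type*} [CommRing R] {N : ℕ} (f : Fin N → R) :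
    2 * ∑ m, ∑ n ∈ Ioi m, f m * f n = (∑ i, f i) ^ 2 - ∑ i, f i ^ 2 := by
  induction N with
  | zero => simp
  | succ N ih =>
    simp only [Fin.sum_univ_succ, Fin.sum_Ioi_zero, Fin.sum_Ioi_succ, ← mul_sum]
    have htail := ih fun i => f i.succ
    simp only [← mul_sum] at htail
    linear_combination htail

theorem two_mul_sum_Icc_sum_Ico_mul {R : Type*} [CommRing R] (N : ℕ) (f : ℕ → R) :
    2 * ∑ k ∈ Icc 1 N, ∑ j ∈ Ico 1 k, f j * f k =
      (∑ k ∈ Icc 1 N, f k) ^ 2 - ∑ k ∈ Icc 1 N, f k ^ 2 := by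
  induction N with
  | zero => simp
  | succ N ih =>
    simp only [sum_Icc_succ_top (show 1 ≤ N + 1 by lia), Ico_add_one_right_eq_Icc, ← sum_mul]
      at ih ⊢
    linear_combination ih

theorem sum_momentum (γ : GZ) (N : ℕ) : ∑ n ∈ Icc 1 N, momentum γ n = ∑ j ∈ Icc 1 N, γ N j := by
  induction N with
  | zero => simp
  | succ N ih => rw [sum_Icc_succ_top (by lia), ih, momentum, Nat.add_sub_cancel]; ring

theorem sum_potentialSymbol (γ : GZ) (N : ℕ) : ∑ n ∈ Icc 1 (N - 1), potentialSymbol γ n =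
    (∑ j ∈ Icc 1 N, γ N j ^ 2 - ∑ n ∈ Icc 1 N, momentum γ n ^ 2) / 2 := by
  rcases N with _ | N
  · simp
  rw [Nat.add_sub_cancel]
  induction N with
  | zero => simp [momentum]
  | succ N ih =>
    rw [sum_Icc_succ_top (by lia), ih, potentialSymbol, sum_Icc_succ_top (b := N + 1)
      (f := fun n => momentum γ n ^ 2) (by lia)]
    ring

theorem sum_sum_Ioi_momentum_mul (γ : GZ) (N : ℕ) :
    ∑ m : Fin N, ∑ n ∈ Ioi m, momentum γ (m + 1) * momentum γ (n + 1) =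
      ∑ n ∈ Icc 1 (N - 1), potentialSymbol γ n +
        ∑ k ∈ Icc 1 N, ∑ j ∈ Ico 1 k, γ N j * γ N k := by
  have hmomenta := two_mul_sum_sum_Ioi_mul fun i : Fin N => momentum γ (i + 1)
  rw [sum_univ_fin_add_one N (momentum γ), sum_univ_fin_add_one N fun n => momentum γ n ^ 2,
    sum_momentum] at hmomenta
  rw [sum_potentialSymbol]
  linear_combination (hmomenta - two_mul_sum_Icc_sum_Ico_mul N (γ N)) / 2

end MomentumAlgebra

/-! ### The wave function -/

section WaveFunction

/-- The exponents of the plane-wave factor, as functions on the tube: the integrand depends on `x`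
only through `exp (∑ i, todaExponent ℏ N g η i ξ * x i)`. -/
def todaExponent (ℏ : ℝ) (N : ℕ) (g : ℕ → ℂ) (η : ℕ → ℕ → ℝ) (i : Fin N) (ξ : GZIdx N → ℝ) : ℂ :=
  I / ℏ * momentum (gzTube N g η ξ) (i + 1)

theorem neg_I_mul_mul_todaExponent {ℏ : ℝ} (hℏ : ℏ ≠ 0) {N : ℕ} (g : ℕ → ℂ) (η : ℕ → ℕ → ℝ)
    (i : Fin N) (ξ : GZIdx N → ℝ) :
    -(I * ℏ) * todaExponent ℏ N g η i ξ = momentum (gzTube N g η ξ) (i + 1) := by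
  have hℏ' : (ℏ : ℂ) ≠ 0 := Complex.ofReal_ne_zero.2 hℏ
  rw [todaExponent]
  field_simp
  simp

/-- The Mellin–Barnes integral over the tube at heights `η`, with spectral parameters `g`. -/
def todaWaveFunction (ℏ : ℝ) (N : ℕ) (g : ℕ → ℂ) (η : ℕ → ℕ → ℝ) (x : Fin N → ℝ) : ℂ :=
  ∫ ξ, todaIntegrand ℏ N (xval x) (gzTube N g η ξ)

theorem xval_val_add_one {N : ℕ} (x : Fin N → ℝ) (i : Fin N) : xval x (i + 1) = x i := by
  simp [xval]

theorem todaIntegrand_gzTube (ℏ : ℝ) {N : ℕ} (g : ℕ → ℂ) (η : ℕ → ℕ → ℝ) (x : Fin N → ℝ)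
    (ξ : GZIdx N → ℝ) : todaIntegrand ℏ N (xval x) (gzTube N g η ξ) =
      todaIntegrand ℏ N 0 (gzTube N g η ξ) *
        Complex.exp (∑ i, todaExponent ℏ N g η i ξ * x i) := by
  have hphase : I / ℏ * ∑ n ∈ Icc 1 N, momentum (gzTube N g η ξ) n * (xval x n : ℂ) =
      ∑ i, todaExponent ℏ N g η i ξ * x i := by
    rw [← sum_univ_fin_add_one, mul_sum]
    simp only [todaExponent, xval_val_add_one, mul_assoc]
  rw [← markedIntegrand_zero, ← markedIntegrand_zero, markedIntegrand, markedIntegrand, planeWave,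
    planeWave, hphase]
  simp

theorem todaWaveFunction_eq_expIntegral (ℏ : ℝ) (N : ℕ) (g : ℕ → ℂ) (η : ℕ → ℕ → ℝ) :
    todaWaveFunction ℏ N g η = expIntegral volume (todaExponent ℏ N g η)
      fun ξ => todaIntegrand ℏ N 0 (gzTube N g η ξ) := by
  funext x
  exact integral_congr_ae (.of_forall (todaIntegrand_gzTube ℏ g η x))

namespace IsAdmissible

variable {ℏ : ℝ} {N : ℕ} {g : ℕ → ℂ} {η : ℕ → ℕ → ℝ} (h : IsAdmissible N g η)

include h

theorem tameExponents_todaExponent (ℏ : ℝ) : TameExponents (todaExponent ℏ N g η) := by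
  obtain ⟨B, -, htube⟩ := h.exists_inTube
  refine ⟨fun i => ?_, ⟨‖I / (ℏ : ℂ)‖ * (4 * N * B), 1, fun i ξ => ?_⟩, ?_⟩
  · exact continuous_const.mul (continuous_momentum (continuous_gzTube_apply N g η) _)
  · rw [todaExponent, norm_mul, pow_one, mul_assoc]
    gcongr
    exact htube.norm_momentum_le ξ i.2
  · refine ⟨2 * N * B / |ℏ|, fun i ξ => ?_⟩
    have hre : (todaExponent ℏ N g η i ξ).re = -((momentum (gzTube N g η ξ) (i + 1)).im / ℏ) := by
      rw [todaExponent, div_mul_eq_mul_div, Complex.div_ofReal_re, Complex.I_mul_re, neg_div]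
    rw [hre, abs_neg, abs_div]
    gcongr
    exact htube.abs_im_momentum_le ξ i.2

theorem rapidlyDecaying_momentum_mul {c : (GZIdx N → ℝ) → ℂ} (hc : RapidlyDecaying c)
    (i : Fin N) : RapidlyDecaying fun ξ => momentum (gzTube N g η ξ) (i + 1) * c ξ := by
  obtain ⟨B, -, htube⟩ := h.exists_inTube
  exact hc.mul (k := 1) (continuous_momentum (continuous_gzTube_apply N g η) _) fun ξ => by
    simpa using htube.norm_momentum_le ξ i.2

variable (hℏ : 0 < ℏ)

include hℏ

theorem potentialSymbol_mul_todaIntegrand {r : ℕ} (hr : r + 1 < N) (x : ℕ → ℝ)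
    (ξ : GZIdx N → ℝ) :
    potentialSymbol (gzTube N g η ξ) (r + 1) * todaIntegrand ℏ N x (gzTube N g η ξ) =
      (-1) ^ r * Complex.exp ((x (r + 1) : ℂ) - x (r + 2)) *
        ∑ j ∈ Icc 1 (r + 1), markedIntegrand ℏ N x (unitArray (r + 1) j)
          (gzTube N g η ξ + (I * ℏ : ℂ) • unitArray (r + 1) j) := by
  rw [sum_markedIntegrand_shift hℏ hr (fun j hj m hm => h.gzTube_ne ξ hr hj hm) x, Complex.exp_neg]
  have hexp := mul_inv_cancel₀ (Complex.exp_ne_zero ((x (r + 1) : ℂ) - x (r + 2)))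
  have hsign : ((-1) ^ r * (-1) ^ r : ℂ) = 1 := by rw [← mul_pow]; simp
  linear_combination (-potentialSymbol (gzTube N g η ξ) (r + 1) *
    todaIntegrand ℏ N x (gzTube N g η ξ)) * ((-1) ^ r * (-1) ^ r * hexp + hsign)

theorem integrable_markedIntegrand_shift (n j : ℕ) (x : ℕ → ℝ) :
    Integrable fun ξ => markedIntegrand ℏ N x (unitArray n j)
      (gzTube N g η ξ + (I * ℏ : ℂ) • unitArray n j) := by
  rw [mul_comm I]
  exact (h.rapidlyDecaying_markedIntegrand hℏ (isMarking_unitArray n j) x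
    (Set.right_mem_Icc.2 hℏ.le)).integrable

theorem integrable_potentialSymbol_mul {n : ℕ} (hn : n ∈ Icc 1 (N - 1)) (x : ℕ → ℝ) :
    Integrable fun ξ => potentialSymbol (gzTube N g η ξ) n *
      todaIntegrand ℏ N x (gzTube N g η ξ) := by
  obtain ⟨r, rfl⟩ := Nat.exists_eq_add_of_le' (mem_Icc.1 hn).1
  have hr : r + 1 < N := by rw [mem_Icc] at hn; lia
  simp only [h.potentialSymbol_mul_todaIntegrand hℏ hr x]
  exact (integrable_finsetSum _ fun j _ =>
    h.integrable_markedIntegrand_shift hℏ (r + 1) j x).const_mul _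

theorem integral_potentialSymbol_mul {n : ℕ} (hn : n ∈ Icc 1 (N - 1)) (x : ℕ → ℝ) :
    ∫ ξ, potentialSymbol (gzTube N g η ξ) n * todaIntegrand ℏ N x (gzTube N g η ξ) =
      Real.exp (x n - x (n + 1)) * ∫ ξ, todaIntegrand ℏ N x (gzTube N g η ξ) := by
  obtain ⟨r, rfl⟩ := Nat.exists_eq_add_of_le' (mem_Icc.1 hn).1
  have hr : r + 1 < N := by rw [mem_Icc] at hn; lia
  have hmarked (j : ℕ) :
      Integrable fun ξ => markedIntegrand ℏ N x (unitArray (r + 1) j) (gzTube N g η ξ) := by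
    simpa using (h.rapidlyDecaying_markedIntegrand hℏ (isMarking_unitArray (r + 1) j) x
      (Set.left_mem_Icc.2 hℏ.le)).integrable (μ := volume)
  have hsum : ∑ j ∈ Icc 1 (r + 1), ∫ ξ, markedIntegrand ℏ N x (unitArray (r + 1) j)
      (gzTube N g η ξ) = (-1) ^ r * ∫ ξ, todaIntegrand ℏ N x (gzTube N g η ξ) := by
    rw [← integral_finsetSum _ fun j _ => hmarked j, ← integral_const_mul]
    exact integral_congr_ae (.of_forall fun ξ =>
      sum_markedIntegrand hℏ hr (fun k hk j hj => h.gzTube_ne ξ hr.le hk hj) x)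
  have hsign : ((-1) ^ r * (-1) ^ r : ℂ) = 1 := by rw [← mul_pow]; simp
  simp only [h.potentialSymbol_mul_todaIntegrand hℏ hr x]
  rw [integral_const_mul, integral_finsetSum _ fun j _ =>
    h.integrable_markedIntegrand_shift hℏ (r + 1) j x, ← sum_congr rfl fun j hj =>
    h.integral_markedIntegrand_unitArray hℏ x hr hj, hsum, Complex.ofReal_exp, Complex.ofReal_sub]
  linear_combination (Complex.exp ((x (r + 1) : ℂ) - x (r + 2)) *
    ∫ ξ, todaIntegrand ℏ N x (gzTube N g η ξ)) * hsign

theorem contDiff_todaWaveFunction (n : ℕ) : ContDiff ℝ n (todaWaveFunction ℏ N g η) := by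
  rw [todaWaveFunction_eq_expIntegral]
  exact contDiff_expIntegral n (h.tameExponents_todaExponent ℏ)
    (h.rapidlyDecaying_todaIntegrand hℏ 0)

variable (x : Fin N → ℝ)

theorem neg_I_mul_fderiv_todaWaveFunction_single (n : Fin N) :
    -(I * ℏ) * fderiv ℝ (todaWaveFunction ℏ N g η) x (Pi.single n 1) =
      ∫ ξ, momentum (gzTube N g η ξ) (n + 1) *
        todaIntegrand ℏ N (xval x) (gzTube N g η ξ) := by
  rw [todaWaveFunction_eq_expIntegral, fderiv_expIntegral_single
    (h.tameExponents_todaExponent ℏ) (h.rapidlyDecaying_todaIntegrand hℏ 0), expIntegral,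
    ← integral_const_mul]
  refine integral_congr_ae (.of_forall fun ξ => ?_)
  have hexponent := neg_I_mul_mul_todaExponent hℏ.ne' g η n ξ
  simp only [todaIntegrand_gzTube]
  linear_combination todaIntegrand ℏ N 0 (gzTube N g η ξ) *
    Complex.exp (∑ i, todaExponent ℏ N g η i ξ * x i) * hexponent

theorem neg_sq_mul_fderiv_fderiv_todaWaveFunction_single (m n : Fin N) :
    -(ℏ : ℂ) ^ 2 * fderiv ℝ (fun y => fderiv ℝ (todaWaveFunction ℏ N g η) y (Pi.single n 1)) x
        (Pi.single m 1) =
      ∫ ξ, momentum (gzTube N g η ξ) (m + 1) * (momentum (gzTube N g η ξ) (n + 1) *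
        todaIntegrand ℏ N (xval x) (gzTube N g η ξ)) := by
  have hD := h.tameExponents_todaExponent ℏ
  have hc := h.rapidlyDecaying_todaIntegrand hℏ 0
  simp only [todaWaveFunction_eq_expIntegral, fderiv_expIntegral_single hD hc]
  rw [fderiv_expIntegral_single hD (hD.rapidlyDecaying_mul hc n), expIntegral,
    ← integral_const_mul]
  refine integral_congr_ae (.of_forall fun ξ => ?_)
  have hm := neg_I_mul_mul_todaExponent hℏ.ne' g η m ξ
  have hn := neg_I_mul_mul_todaExponent hℏ.ne' g η n ξ
  simp only [todaIntegrand_gzTube, ← hm, ← hn]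
  linear_combination -(ℏ : ℂ) ^ 2 * todaExponent ℏ N g η m ξ * todaExponent ℏ N g η n ξ *
    todaIntegrand ℏ N 0 (gzTube N g η ξ) *
    Complex.exp (∑ i, todaExponent ℏ N g η i ξ * x i) * Complex.I_sq

theorem sum_fderiv_todaWaveFunction :
    -(I * ℏ) * ∑ n, fderiv ℝ (todaWaveFunction ℏ N g η) x (Pi.single n 1) =
      (∑ j ∈ Icc 1 N, g j) * todaWaveFunction ℏ N g η x := by
  have hF := h.rapidlyDecaying_todaIntegrand hℏ (xval x)
  simp only [mul_sum, h.neg_I_mul_fderiv_todaWaveFunction_single hℏ x]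
  rw [← integral_finsetSum _ fun n _ => (h.rapidlyDecaying_momentum_mul hF n).integrable,
    todaWaveFunction, ← integral_const_mul]
  refine integral_congr_ae (.of_forall fun ξ => ?_)
  simp only [← sum_mul, sum_univ_fin_add_one N (momentum (gzTube N g η ξ)), sum_momentum,
    gzTube_top]

theorem sum_sum_fderiv_fderiv_todaWaveFunction :
    -(ℏ : ℂ) ^ 2 * ∑ m, ∑ n ∈ Ioi m,
        fderiv ℝ (fun y => fderiv ℝ (todaWaveFunction ℏ N g η) y (Pi.single n 1)) x
          (Pi.single m 1) =
      (∑ n ∈ Icc 1 (N - 1), (Real.exp (xval x n - xval x (n + 1)) : ℂ)) *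
          todaWaveFunction ℏ N g η x +
        (∑ k ∈ Icc 1 N, ∑ j ∈ Ico 1 k, g j * g k) * todaWaveFunction ℏ N g η x := by
  have hF := h.rapidlyDecaying_todaIntegrand hℏ (xval x)
  have hmomenta (m n : Fin N) :=
    (h.rapidlyDecaying_momentum_mul (h.rapidlyDecaying_momentum_mul hF n) m).integrable
      (μ := volume)
  have hpotential n (hn : n ∈ Icc 1 (N - 1)) := h.integrable_potentialSymbol_mul hℏ hn (xval x)
  calc _ = ∑ m : Fin N, ∑ n ∈ Ioi m, ∫ ξ, momentum (gzTube N g η ξ) (m + 1) *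
        (momentum (gzTube N g η ξ) (n + 1) * todaIntegrand ℏ N (xval x) (gzTube N g η ξ)) := by
        simp only [mul_sum, h.neg_sq_mul_fderiv_fderiv_todaWaveFunction_single hℏ x]
    _ = ∫ ξ, ∑ m : Fin N, ∑ n ∈ Ioi m, momentum (gzTube N g η ξ) (m + 1) *
        (momentum (gzTube N g η ξ) (n + 1) * todaIntegrand ℏ N (xval x) (gzTube N g η ξ)) := by
        rw [integral_finsetSum _ fun m _ => integrable_finsetSum _ fun n _ => hmomenta m n]
        exact sum_congr rfl fun m _ => (integral_finsetSum _ fun n _ => hmomenta m n).symm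
    _ = ∫ ξ, (∑ n ∈ Icc 1 (N - 1), potentialSymbol (gzTube N g η ξ) n *
          todaIntegrand ℏ N (xval x) (gzTube N g η ξ)) +
        (∑ k ∈ Icc 1 N, ∑ j ∈ Ico 1 k, g j * g k) *
          todaIntegrand ℏ N (xval x) (gzTube N g η ξ) := by
        refine integral_congr_ae (.of_forall fun ξ => ?_)
        simp only [← mul_assoc, ← sum_mul, sum_sum_Ioi_momentum_mul, gzTube_top, add_mul]
    _ = _ := by
        rw [integral_add (integrable_finsetSum _ hpotential) (hF.integrable.const_mul _),
          integral_finsetSum _ hpotential, integral_const_mul,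
          sum_congr rfl fun n hn => h.integral_potentialSymbol_mul hℏ hn (xval x), ← sum_mul,
          todaWaveFunction]

end IsAdmissible

end WaveFunction

/-- the Mellin–Barnes integral `ψ(x) = ∫ F(ξ; x) dξ` is twice
continuously differentiable and solves the first two quantum open Toda chain
equations, with eigenvalues `σ_1(γ_N)` and `σ_2(γ_N)`. -/
theorem toda_wave_function_eigen (ℏ : ℝ) (hℏ : 0 < ℏ) (N : ℕ) (hN : 2 ≤ N)
    (γtop : ℕ → ℂ) (η : ℕ → ℕ → ℝ)
    (hηtop : ∀ k, η N k = (γtop k).im)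
    (hη : ∀ n : ℕ, 1 ≤ n → n ≤ N - 1 → ∀ j ∈ Icc 1 n, ∀ m ∈ Icc 1 (n + 1),
      η (n + 1) m < η n j)
    (ψ : (Fin N → ℝ) → ℂ)
    (hψ : ∀ x : Fin N → ℝ,
      ψ x = ∫ ξ : GZIdx N → ℝ, todaIntegrand ℏ N (xval x) (gzTube N γtop η ξ)) :
    ContDiff ℝ 2 ψ ∧
    (∀ x : Fin N → ℝ,
      -(Complex.I * (ℏ : ℂ)) * ∑ n : Fin N, fderiv ℝ ψ x (Pi.single n 1) =
        (∑ j ∈ Icc 1 N, γtop j) * ψ x) ∧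
    (∀ x : Fin N → ℝ,
      -((ℏ : ℂ) ^ 2) * ∑ m : Fin N, ∑ n ∈ Finset.Ioi m,
          fderiv ℝ (fun y => fderiv ℝ ψ y (Pi.single n 1)) x (Pi.single m 1) -
        (∑ j ∈ Icc 1 (N - 1), ((Real.exp (xval x j - xval x (j + 1)) : ℝ) : ℂ)) * ψ x =
        (∑ k ∈ Icc 1 N, ∑ j ∈ Ico 1 k, γtop j * γtop k) * ψ x) := by
  have h : IsAdmissible N γtop η := ⟨hηtop, hη⟩
  obtain rfl : ψ = todaWaveFunction ℏ N γtop η := funext hψ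
  refine ⟨h.contDiff_todaWaveFunction hℏ 2, h.sum_fderiv_todaWaveFunction hℏ, fun x => ?_⟩
  rw [h.sum_sum_fderiv_fderiv_todaWaveFunction hℏ x, add_sub_cancel_left]
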